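/- arXiv:1707.06369 — 5 statements merged into one kernel-verified Lean document; each statement's English description precedes it below -/
import Mathlib

section
/- Let R be an algebraic curvature tensor on ℝ^16 such that for every unit vector X the (self-adjoint) Jacobi operator Y ↦ R(Y,X)X has eigenvalue 0 on the line ℝX and eigenvalues 4 and 1 on the hyperplane X^⊥ with multiplicities 7 and 8 respectively (as holds for the curvature tensor of the Cayley projective plane 𝕆P² with scalar curvature 576, whose sectional curvatures lie in [1,4]). Then for every k ∈ ℕ the Stiefel average of (X,Y) ↦ ⟨R(Y,X)X, Y⟩^k equals ∑_{r=0}^k 4^r · C(−7/2, r) · C(−4, k−r) / C(−15/2, k). -/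
/-!
For a fixed unit vector `X`, the Jacobi operator is self-adjoint, so its eigenspaces for `4` and `1`
are orthogonal and span `X^⊥`; on the unit sphere of `X^⊥ = W₁ ⊕ W₂` the integrand is
`(4‖u‖² + ‖v‖²)^k`. The inner average is therefore a constant that does not depend on `X`
(`inner_average_jacobi`), and the outer average of a constant is that constant, because the Hausdorff
measure of the unit sphere is positive and finite (`hausdorffMeasure_sphere_pos`,
`hausdorffMeasure_sphere_lt_top`).

To compute the constant, the Hausdorff measure of the sphere is compared with the cone measure
`Measure.toSphere` of Lebesgue measure. Both are finite and rotation-invariant, and an invariant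
probability measure on the sphere is unique by a Fubini argument with characteristic functions
(`eq_of_invariant`, `average_hausdorff_eq_average_toSphere`). The cone measure is the angular part
of Lebesgue measure in polar coordinates, so integrating `(4‖u‖² + ‖v‖²)^k exp(-‖u‖² - ‖v‖²)` over
`W₁ ⊕ W₂` in two ways, in polar coordinates and by binomial expansion with Fubini, expresses the
spherical moment through values of the Gamma function at `7/2 + r`, `4 + k - r` and `15/2 + k`
(`average_toSphere_quadratic`). The quotients of these by their values at `r = k = 0` are rising
factorials, that is, falling factorials at negative arguments up to sign; the signs cancel.
-/

open MeasureTheory RealInnerProductSpace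
open scoped Real

/-- The falling factorial `[x]_s = x(x−1)⋯(x−s+1)`. -/
noncomputable def fall (x : ℝ) (s : ℕ) : ℝ := ∏ j ∈ Finset.range s, (x - (j : ℝ))

/-- An algebraic curvature tensor on a real inner product space `V`: a trilinear map
`(X,Y,Z) ↦ R X Y Z` that is antisymmetric in `X,Y`, gives skew-symmetric endomorphisms
`Z ↦ R X Y Z`, and satisfies the first Bianchi identity. -/
structure AlgCurvTensor (V : Type*) [NormedAddCommGroup V] [InnerProductSpace ℝ V] where
  R : V →ₗ[ℝ] V →ₗ[ℝ] V →ₗ[ℝ] V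
  antisymm : ∀ X Y Z : V, R X Y Z = - R Y X Z
  skew : ∀ X Y Z W : V, ⟪R X Y Z, W⟫ = - ⟪R X Y W, Z⟫
  bianchi : ∀ X Y Z : V, R X Y Z + R Y Z X + R Z X Y = 0

/-- The Stiefel average of a function `f(X,Y)` of orthonormal pairs in an `m`-dimensional
real inner product space: average over `X` in the unit sphere (with `(m−1)`-dimensional
Hausdorff measure) of the average of `f(X,·)` over the unit sphere of `X^⊥` (with its
`(m−2)`-dimensional Hausdorff measure). -/
noncomputable def stiefelAvg {V : Type*} [NormedAddCommGroup V] [InnerProductSpace ℝ V]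
    [MeasurableSpace V] [BorelSpace V] (m : ℕ) (f : V → V → ℝ) : ℝ :=
  ((μH[(m : ℝ) - 1] (Metric.sphere (0 : V) 1)).toReal)⁻¹ *
    ∫ X in Metric.sphere (0 : V) 1,
      (((μH[(m : ℝ) - 2] {Y : V | ‖Y‖ = 1 ∧ ⟪X, Y⟫ = 0}).toReal)⁻¹ *
        ∫ Y in {Y : V | ‖Y‖ = 1 ∧ ⟪X, Y⟫ = 0}, f X Y ∂(μH[(m : ℝ) - 2]))
      ∂(μH[(m : ℝ) - 1])

/-- The generalized binomial coefficient `C(x,s) = [x]_s / s!`. -/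
noncomputable def genBinom (x : ℝ) (s : ℕ) : ℝ := fall x s / (Nat.factorial s : ℝ)

/-! ### Rotation-invariant measures on the unit sphere -/

section Spheres

variable {E : Type*} [NormedAddCommGroup E] [InnerProductSpace ℝ E] [MeasurableSpace E]
  [BorelSpace E]

open Module

lemma hausdorff_sphere_invariant (d : ℝ) (U : E ≃ₗᵢ[ℝ] E) :
    ((μH[d] : Measure E).restrict (Metric.sphere 0 1)).map U =
      (μH[d] : Measure E).restrict (Metric.sphere 0 1) := by
  have h := ((U.toIsometryEquiv.measurePreserving_hausdorffMeasure d).restrict_preimage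
    (s := Metric.sphere (0 : E) 1) Metric.isClosed_sphere.measurableSet).map_eq
  have h2 : U.toIsometryEquiv ⁻¹' (Metric.sphere (0 : E) 1) = Metric.sphere 0 1 := by
    ext x; simp
  rw [h2] at h
  exact h

variable [FiniteDimensional ℝ E]

/-- The orthogonal projection onto a hyperplane does not increase Hausdorff measure and maps the
sphere onto a set containing the unit ball of the hyperplane. -/
lemma hausdorffMeasure_sphere_pos {n : ℕ} (hn : finrank ℝ E = n + 1) :
    0 < μH[(n : ℝ)] (Metric.sphere (0 : E) 1) := by
  have : Nontrivial E := Module.nontrivial_of_finrank_pos (R := ℝ) (by omega)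
  obtain ⟨v, hv⟩ := exists_norm_eq E (zero_le_one' ℝ)
  have hv0 : v ≠ 0 := by rintro rfl; simp at hv
  have : Fact (finrank ℝ E = n + 1) := ⟨hn⟩
  have hK : finrank ℝ (ℝ ∙ v)ᗮ = n := Submodule.finrank_orthogonal_span_singleton hv0
  have hpos : 0 < μH[(n : ℝ)] (Metric.ball (0 : (ℝ ∙ v)ᗮ) 1) := by
    rw [← hK]
    exact Metric.measure_ball_pos _ _ one_pos
  refine (hpos.trans_le (measure_mono ?_)).trans_le
    (hausdorffMeasure_orthogonalProjectionOnto_le (𝕜 := ℝ) (ℝ ∙ v)ᗮ n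
      (Metric.sphere (0 : E) 1) (by positivity))
  intro w hw
  have hw1 : ‖(w : E)‖ < 1 := by simpa using hw
  have hvw : ⟪(w : E), v⟫ = 0 := Submodule.mem_orthogonal_singleton_iff_inner_left.mp w.2
  refine ⟨(w : E) + √(1 - ‖(w : E)‖ ^ 2) • v, ?_, ?_⟩
  · have h0 : 0 ≤ 1 - ‖(w : E)‖ ^ 2 := by nlinarith [norm_nonneg (w : E)]
    have : ‖(w : E) + √(1 - ‖(w : E)‖ ^ 2) • v‖ ^ 2 = 1 := by
      rw [norm_add_sq_real, inner_smul_right, hvw, norm_smul, hv]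
      simp [Real.sq_sqrt h0]
    rw [mem_sphere_zero_iff_norm]
    exact (pow_eq_one_iff_of_nonneg (norm_nonneg _) two_ne_zero).mp this
  · rw [map_add, map_smul, Submodule.orthogonalProjectionOnto_mem_subspace_eq_self,
      Submodule.orthogonalProjectionOnto_orthogonalComplement_singleton_eq_zero]
    simp

/-- Inverse stereographic projections from `v` and `-v` exhibit the sphere as the union of two
Lipschitz images of compact balls of dimension `n`. -/
lemma hausdorffMeasure_sphere_lt_top {n : ℕ} (hn : finrank ℝ E = n + 1) :
    μH[(n : ℝ)] (Metric.sphere (0 : E) 1) < ⊤ := by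
  have : Nontrivial E := Module.nontrivial_of_finrank_pos (R := ℝ) (by omega)
  obtain ⟨v, hv⟩ := exists_norm_eq E (zero_le_one' ℝ)
  have : Fact (finrank ℝ E = n + 1) := ⟨hn⟩
  -- The hemisphere facing away from `v` is a Lipschitz image of a ball in the hyperplane `v^⊥`.
  have key : ∀ v : E, ‖v‖ = 1 →
      μH[(n : ℝ)] {x : E | ‖x‖ = 1 ∧ ⟪v, x⟫ ≤ 0} < ⊤ := by
    intro v hv
    have hv0 : v ≠ 0 := by rintro rfl; simp at hv
    have hK : finrank ℝ (ℝ ∙ v)ᗮ = n := Submodule.finrank_orthogonal_span_singleton hv0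
    have hB : μH[(n : ℝ)] (Metric.closedBall (0 : (ℝ ∙ v)ᗮ) 2) < ⊤ := by
      rw [← hK]
      exact (isCompact_closedBall _ _).measure_lt_top
    have hsm : ContDiff ℝ 1 (fun w : (ℝ ∙ v)ᗮ => stereoInvFunAux v (w : E)) :=
      contDiff_stereoInvFunAux.comp (ℝ ∙ v)ᗮ.subtypeL.contDiff
    obtain ⟨C, hC⟩ := hsm.locallyLipschitz.locallyLipschitzOn.exists_lipschitzOnWith_of_compact
      (isCompact_closedBall (0 : (ℝ ∙ v)ᗮ) 2)
    refine lt_of_le_of_lt (measure_mono ?_)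
      ((hC.hausdorffMeasure_image_le (d := (n : ℝ)) (by positivity)).trans_lt
        (ENNReal.mul_lt_top (by simp) hB))
    rintro x ⟨hx1, hx2⟩
    refine ⟨stereoToFun v x, ?_, ?_⟩
    · rw [mem_closedBall_zero_iff, stereoToFun_apply, norm_smul]
      have h1 : ‖(ℝ ∙ v)ᗮ.orthogonalProjectionOnto x‖ ≤ 1 := by
        simpa [hx1] using (ℝ ∙ v)ᗮ.norm_orthogonalProjectionOnto_apply_le x
      have h2 : ‖2 / (1 - ⟪v, x⟫)‖ ≤ 2 := by
        rw [Real.norm_of_nonneg (by apply div_nonneg <;> linarith)]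
        exact div_le_self (by norm_num) (by linarith)
      calc _ ≤ (2 : ℝ) * 1 := by gcongr; exact h2
        _ = 2 := by norm_num
    · have hne : x ≠ v := by
        rintro rfl
        rw [real_inner_self_eq_norm_sq, hx1] at hx2
        norm_num at hx2
      exact congrArg Subtype.val
        (stereo_left_inv hv (x := ⟨x, by simpa using hx1⟩) hne)
  refine lt_of_le_of_lt (measure_mono ?_) (measure_union_lt_top (key v hv) (key (-v) (by simpa)))
  intro x hx
  rw [mem_sphere_zero_iff_norm] at hx
  rcases le_total ⟪v, x⟫ 0 with h | h
  · exact Or.inl ⟨hx, h⟩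
  · exact Or.inr ⟨hx, by simpa [inner_neg_left] using h⟩

lemma charFun_eq_of_norm_eq {σ : Measure E} (hσ : ∀ U : E ≃ₗᵢ[ℝ] E, σ.map U = σ)
    {v w : E} (h : ‖v‖ = ‖w‖) : charFun σ v = charFun σ w := by
  obtain ⟨U, rfl⟩ : ∃ U : E ≃ₗᵢ[ℝ] E, U v = w := ⟨_, Submodule.reflection_sub h⟩
  conv_rhs => rw [← hσ U]
  rw [charFun_apply, charFun_apply, integral_map (by fun_prop) (by fun_prop)]
  simp

/-- Uniqueness of the rotation-invariant probability measure on the unit sphere. If `φ_σ(r)` denotes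
the common value of the characteristic function of `σ` at vectors of norm `r`, then
`φ_σ(r) = ∬ exp(i r ⟪x, y⟫) dσ(x) dτ(y) = φ_τ(r)` by Fubini, so the characteristic functions
agree. -/
lemma eq_of_invariant {σ τ : Measure E} [IsProbabilityMeasure σ] [IsProbabilityMeasure τ]
    (hσ : ∀ U : E ≃ₗᵢ[ℝ] E, σ.map U = σ) (hτ : ∀ U : E ≃ₗᵢ[ℝ] E, τ.map U = τ)
    (hσ1 : ∀ᵐ x ∂σ, ‖x‖ = 1) (hτ1 : ∀ᵐ x ∂τ, ‖x‖ = 1) : σ = τ := by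
  refine Measure.ext_of_charFun (funext fun w => ?_)
  have h1 : ∫ y, charFun σ (‖w‖ • y) ∂τ = charFun σ w := by
    rw [integral_congr_ae (g := fun _ => charFun σ w)]
    · simp
    · filter_upwards [hτ1] with y hy
      exact charFun_eq_of_norm_eq hσ (by simp [norm_smul, hy])
  have h2 : ∫ x, charFun τ (‖w‖ • x) ∂σ = charFun τ w := by
    rw [integral_congr_ae (g := fun _ => charFun τ w)]
    · simp
    · filter_upwards [hσ1] with y hy
      exact charFun_eq_of_norm_eq hτ (by simp [norm_smul, hy])
  rw [← h1, ← h2]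
  simp only [charFun_apply]
  rw [integral_integral_swap]
  · simp only [inner_smul_right, real_inner_comm]
  · refine Integrable.of_bound (C := 1) (by fun_prop) (Filter.Eventually.of_forall fun p => ?_)
    simp [Function.uncurry, Complex.norm_exp_ofReal_mul_I]

/-- The cone measure `toSphere`, seen as a measure on `E`, counts the volume of the part of the
punctured unit ball that projects radially into `s`. -/
lemma map_toSphere_apply [Nontrivial E] {s : Set E} (hs : MeasurableSet s) :
    ((volume : Measure E).toSphere.map Subtype.val) s =
      finrank ℝ E * volume {x : E | x ∈ Metric.ball (0 : E) 1 ∧ x ≠ 0 ∧ ‖x‖⁻¹ • x ∈ s} := by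
  rw [Measure.map_apply measurable_subtype_coe hs,
    Measure.toSphere_apply' _ (measurable_subtype_coe hs)]
  congr 2
  ext x
  simp only [Set.mem_smul, Set.mem_image, Set.mem_preimage, Set.mem_ofPred_eq, mem_ball_zero_iff]
  constructor
  · rintro ⟨r, ⟨hr0, hr1⟩, y, ⟨⟨y, hy⟩, hys, rfl⟩, rfl⟩
    rw [mem_sphere_zero_iff_norm] at hy
    have hy0 : y ≠ 0 := by rintro rfl; simp at hy
    have hn : ‖r • y‖ = r := by rw [norm_smul, hy, Real.norm_of_nonneg hr0.le, mul_one]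
    refine ⟨by simpa [hn] using hr1, smul_ne_zero hr0.ne' hy0, ?_⟩
    rw [hn, smul_smul, inv_mul_cancel₀ hr0.ne', one_smul]
    exact hys
  · rintro ⟨h1, h0, hxs⟩
    have hx : 0 < ‖x‖ := norm_pos_iff.mpr h0
    refine ⟨‖x‖, ⟨hx, h1⟩, ‖x‖⁻¹ • x, ⟨⟨‖x‖⁻¹ • x, ?_⟩, hxs, rfl⟩, ?_⟩
    · simp [norm_smul, hx.ne']
    · rw [smul_smul, mul_inv_cancel₀ hx.ne', one_smul]

lemma map_toSphere_invariant [Nontrivial E] (U : E ≃ₗᵢ[ℝ] E) :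
    ((volume : Measure E).toSphere.map Subtype.val).map U =
      (volume : Measure E).toSphere.map Subtype.val := by
  ext s hs
  have hU : Measurable U := U.continuous.measurable
  rw [Measure.map_apply hU hs, map_toSphere_apply (hU hs), map_toSphere_apply hs]
  congr 1
  have h : MeasurePreserving U.toMeasurableEquiv (volume : Measure E) volume := U.measurePreserving
  rw [← h.measure_preimage_equiv {x : E | x ∈ Metric.ball (0 : E) 1 ∧ x ≠ 0 ∧ ‖x‖⁻¹ • x ∈ s}]
  congr 1
  ext x
  simp

/-- Averages over the unit sphere with respect to Hausdorff measure and to the cone measure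
coincide: both normalized measures are rotation-invariant. -/
lemma average_hausdorff_eq_average_toSphere {n : ℕ} (hn : finrank ℝ E = n + 1) (F : E → ℝ)
    (hF : Continuous F) :
    (μH[(n : ℝ)] (Metric.sphere (0 : E) 1)).toReal⁻¹ *
        ∫ x in Metric.sphere (0 : E) 1, F x ∂μH[(n : ℝ)] =
      ((volume : Measure E).toSphere.real Set.univ)⁻¹ *
        ∫ y, F (y : E) ∂(volume : Measure E).toSphere := by
  have : Nontrivial E := Module.nontrivial_of_finrank_pos (R := ℝ) (by omega)
  set σ : Measure E := (μH[(n : ℝ)] : Measure E).restrict (Metric.sphere 0 1) with hσ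
  set τ : Measure E := (volume : Measure E).toSphere.map Subtype.val with hτ
  have hσu : σ Set.univ = μH[(n : ℝ)] (Metric.sphere (0 : E) 1) := by simp [hσ]
  have hτu : τ Set.univ = (volume : Measure E).toSphere Set.univ := by
    rw [hτ, Measure.map_apply measurable_subtype_coe .univ, Set.preimage_univ]
  have : IsFiniteMeasure σ := ⟨by rw [hσu]; exact hausdorffMeasure_sphere_lt_top hn⟩
  have : NeZero σ := ⟨fun h => by
    have := hausdorffMeasure_sphere_pos (E := E) hn
    rw [← hσu, h] at this
    simp at this⟩
  have : IsFiniteMeasure τ := ⟨by rw [hτu]; exact measure_lt_top _ _⟩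
  have : NeZero τ := ⟨fun h => by
    rw [h, Measure.coe_zero, Pi.zero_apply] at hτu
    exact Measure.toSphere_ne_zero volume (Measure.measure_univ_eq_zero.mp hτu.symm)⟩
  have heq : (σ Set.univ)⁻¹ • σ = (τ Set.univ)⁻¹ • τ := by
    refine eq_of_invariant (fun U => ?_) (fun U => ?_) ?_ ?_
    · rw [Measure.map_smul, hausdorff_sphere_invariant]
    · rw [Measure.map_smul, map_toSphere_invariant]
    · refine Measure.ae_smul_measure ?_ _
      filter_upwards [ae_restrict_mem Metric.isClosed_sphere.measurableSet] with x hx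
      simpa using hx
    · refine Measure.ae_smul_measure ?_ _
      rw [ae_map_iff (by fun_prop) (measurableSet_eq_fun (by fun_prop) (by fun_prop))]
      exact Filter.Eventually.of_forall fun x => by simp
  have hav : ⨍ x, F x ∂σ = ⨍ x, F x ∂τ := by
    rw [average, average, heq]
  rw [average_eq, average_eq, measureReal_def, measureReal_def, hσu, hτu,
    integral_map (by fun_prop) hF.aestronglyMeasurable, smul_eq_mul, smul_eq_mul] at hav
  exact hav

end Spheres

/-! ### Gaussian integrals in polar coordinates -/

section GaussianMoments

variable {E : Type*} [NormedAddCommGroup E] [InnerProductSpace ℝ E] [FiniteDimensional ℝ E]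
  [MeasurableSpace E] [BorelSpace E]

open Module

/-- Polar coordinates separate the Gaussian integral of a homogeneous function of degree `2 * k`. -/
lemma integral_gaussian_homogeneous [Nontrivial E] (k : ℕ) (F : E → ℝ)
    (hF : ∀ (r : ℝ) (x : E), F (r • x) = r ^ (2 * k) * F x) :
    ∫ x : E, F x * Real.exp (-‖x‖ ^ 2) =
      (∫ y, F (y : E) ∂(volume : Measure E).toSphere) *
        ∫ r in Set.Ioi (0 : ℝ), r ^ (finrank ℝ E - 1) * (r ^ (2 * k) * Real.exp (-r ^ 2)) := by
  let g : Metric.sphere (0 : E) 1 × Set.Ioi (0 : ℝ) → ℝ := fun p =>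
    F (p.1 : E) * ((p.2 : ℝ) ^ (2 * k) * Real.exp (-(p.2 : ℝ) ^ 2))
  calc
    ∫ x : E, F x * Real.exp (-‖x‖ ^ 2) =
        ∫ x : ({(0)}ᶜ : Set E), F x.1 * Real.exp (-‖x.1‖ ^ 2) ∂((volume : Measure E).comap Subtype.val) := by
      rw [integral_subtype_comap (measurableSet_singleton _).compl
        fun x : E => F x * Real.exp (-‖x‖ ^ 2), restrict_compl_singleton]
    _ = ∫ p, g p ∂((volume : Measure E).toSphere.prod (.volumeIoiPow (finrank ℝ E - 1))) := by
      rw [← (volume : Measure E).measurePreserving_homeomorphUnitSphereProd.integral_comp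
        (Homeomorph.measurableEmbedding _) g]
      refine integral_congr_ae (Filter.Eventually.of_forall fun x => ?_)
      have hx : ‖(x : E)‖ ≠ 0 := norm_ne_zero_iff.mpr x.2
      simp only [g, homeomorphUnitSphereProd_apply_fst_coe, homeomorphUnitSphereProd_apply_snd_coe,
        hF]
      field_simp
      rw [mul_assoc, ← mul_pow, one_div, inv_mul_cancel₀ hx, one_pow, mul_one]
    _ = (∫ y, F (y : E) ∂(volume : Measure E).toSphere) *
        ∫ r : Set.Ioi (0 : ℝ), ((r : ℝ) ^ (2 * k) * Real.exp (-(r : ℝ) ^ 2))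
          ∂(.volumeIoiPow (finrank ℝ E - 1)) :=
      integral_prod_mul (fun y : Metric.sphere (0 : E) 1 => F (y : E))
        (fun r : Set.Ioi (0 : ℝ) => (r : ℝ) ^ (2 * k) * Real.exp (-(r : ℝ) ^ 2))
    _ = _ := by
      congr 1
      simp only [Measure.volumeIoiPow, ENNReal.ofReal]
      rw [integral_withDensity_eq_integral_smul,
        integral_subtype_comap measurableSet_Ioi fun a : ℝ =>
          Real.toNNReal (a ^ (finrank ℝ E - 1)) • (a ^ (2 * k) * Real.exp (-a ^ 2)),
        setIntegral_congr_fun measurableSet_Ioi fun x hx ↦ ?_]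
      · rw [NNReal.smul_def, Real.coe_toNNReal _ (pow_nonneg hx.out.le _), smul_eq_mul]
      · exact (measurable_subtype_coe.pow_const _).real_toNNReal

lemma integral_radial (n k : ℕ) :
    ∫ r in Set.Ioi (0 : ℝ), r ^ n * (r ^ (2 * k) * Real.exp (-r ^ 2)) =
      Real.Gamma ((n + 1 : ℕ) / 2 + k) / 2 := by
  have h := integral_rpow_mul_exp_neg_rpow (p := 2) (q := ((n + 2 * k : ℕ) : ℝ)) two_pos
    (by linarith [(n + 2 * k).cast_nonneg (α := ℝ)])
  rw [show (((n + 1 : ℕ) : ℝ) / 2 + k) = (((n + 2 * k : ℕ) : ℝ) + 1) / 2 by push_cast; ring,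
    div_eq_inv_mul (Real.Gamma _), ← one_div, ← h]
  refine setIntegral_congr_fun measurableSet_Ioi fun r _ => ?_
  simp only [Real.rpow_natCast]
  rw [show (2 : ℝ) = ((2 : ℕ) : ℝ) by norm_num, Real.rpow_natCast, pow_add]
  ring

lemma integrable_gaussian_norm [Nontrivial E] (k : ℕ) :
    Integrable (fun x : E => ‖x‖ ^ (2 * k) * Real.exp (-‖x‖ ^ 2)) := by
  rw [integrable_fun_norm_addHaar volume (f := fun r => r ^ (2 * k) * Real.exp (-r ^ 2))]
  have h := integrableOn_rpow_mul_exp_neg_rpow (p := 2)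
    (s := ((finrank ℝ E - 1 + 2 * k : ℕ) : ℝ))
    (by linarith [(finrank ℝ E - 1 + 2 * k).cast_nonneg (α := ℝ)]) two_pos
  refine h.congr_fun (fun r _ => ?_) measurableSet_Ioi
  simp only [Real.rpow_natCast, smul_eq_mul]
  rw [show (2 : ℝ) = ((2 : ℕ) : ℝ) by norm_num, Real.rpow_natCast, pow_add]
  ring

lemma integral_gaussian_norm [Nontrivial E] (k : ℕ) :
    ∫ x : E, ‖x‖ ^ (2 * k) * Real.exp (-‖x‖ ^ 2) =
      (volume : Measure E).toSphere.real Set.univ *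
        (Real.Gamma ((finrank ℝ E : ℝ) / 2 + k) / 2) := by
  rw [integral_gaussian_homogeneous k (fun x : E => ‖x‖ ^ (2 * k))
    (fun r x => by rw [norm_smul, mul_pow, Real.norm_eq_abs, Even.pow_abs (even_two_mul k)]),
    integral_radial, Nat.sub_add_cancel finrank_pos]
  simp

end GaussianMoments

/-- `Γ(a + s) / Γ(a)` is the rising factorial of `a`, which is `(-1) ^ s` times the falling
factorial of `-a`. -/
lemma Gamma_add_nat (a : ℝ) (ha : 0 < a) (s : ℕ) :
    Real.Gamma (a + s) = (-1) ^ s * fall (-a) s * Real.Gamma a := by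
  induction s with
  | zero => simp [fall]
  | succ s ih =>
    rw [Nat.cast_succ, ← add_assoc, Real.Gamma_add_one (by positivity), ih]
    simp only [fall, Finset.prod_range_succ, pow_succ]
    ring

lemma Gamma_eq_genBinom (a : ℝ) (ha : 0 < a) (s : ℕ) :
    Real.Gamma (a + s) = (-1) ^ s * (s.factorial * genBinom (-a) s) * Real.Gamma a := by
  rw [Gamma_add_nat a ha, genBinom, mul_div_cancel₀ _ (by positivity)]

/-! ### Spherical moments of a quadratic form with two eigenvalues -/

section Model

variable {U V : Type*} [NormedAddCommGroup U] [InnerProductSpace ℝ U] [FiniteDimensional ℝ U]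
  [MeasurableSpace U] [BorelSpace U] [Nontrivial U]
  [NormedAddCommGroup V] [InnerProductSpace ℝ V] [FiniteDimensional ℝ V]
  [MeasurableSpace V] [BorelSpace V] [Nontrivial V]

open Module

lemma integral_gaussian_quadratic (a b : ℝ) (k : ℕ) :
    ∫ x : WithLp 2 (U × V), (a * ‖x.fst‖ ^ 2 + b * ‖x.snd‖ ^ 2) ^ k * Real.exp (-‖x‖ ^ 2) =
      ∑ r ∈ Finset.range (k + 1), (k.choose r : ℝ) * a ^ r * b ^ (k - r) *
        ((∫ u : U, ‖u‖ ^ (2 * r) * Real.exp (-‖u‖ ^ 2)) *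
          ∫ v : V, ‖v‖ ^ (2 * (k - r)) * Real.exp (-‖v‖ ^ 2)) := by
  have h := (WithLp.volume_preserving_ofLp U V).integral_comp
    (MeasurableEquiv.toLp 2 (U × V)).symm.measurableEmbedding
    (fun p : U × V => (a * ‖p.1‖ ^ 2 + b * ‖p.2‖ ^ 2) ^ k *
      (Real.exp (-‖p.1‖ ^ 2) * Real.exp (-‖p.2‖ ^ 2)))
  have h1 : ∀ x : WithLp 2 (U × V), Real.exp (-‖x‖ ^ 2) =
      Real.exp (-‖x.fst‖ ^ 2) * Real.exp (-‖x.snd‖ ^ 2) := fun x => by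
    rw [← Real.exp_add, WithLp.prod_norm_sq_eq_of_L2, neg_add]
  simp only [h1]
  refine h.trans ?_
  have h2 : ∀ p : U × V, (a * ‖p.1‖ ^ 2 + b * ‖p.2‖ ^ 2) ^ k *
      (Real.exp (-‖p.1‖ ^ 2) * Real.exp (-‖p.2‖ ^ 2)) =
      ∑ r ∈ Finset.range (k + 1), (k.choose r : ℝ) * a ^ r * b ^ (k - r) *
        ((‖p.1‖ ^ (2 * r) * Real.exp (-‖p.1‖ ^ 2)) *
          (‖p.2‖ ^ (2 * (k - r)) * Real.exp (-‖p.2‖ ^ 2))) := fun p => by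
    rw [add_pow, Finset.sum_mul]
    refine Finset.sum_congr rfl fun r _ => ?_
    rw [mul_pow, mul_pow, pow_mul, pow_mul]
    ring
  simp only [h2]
  rw [integral_finsetSum]
  · refine Finset.sum_congr rfl fun r _ => ?_
    rw [integral_const_mul]
    congr 1
    exact integral_prod_mul (fun u : U => ‖u‖ ^ (2 * r) * Real.exp (-‖u‖ ^ 2))
      (fun v : V => ‖v‖ ^ (2 * (k - r)) * Real.exp (-‖v‖ ^ 2))
  · intro r _
    exact ((integrable_gaussian_norm (E := U) r).mul_prod
      (integrable_gaussian_norm (E := V) (k - r))).const_mul _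

/-- Moments over the unit sphere of `U ⊕ V` of the quadratic form equal to `a` on `U` and `b` on `V`.
The binomial expansion of the Gaussian integral factors over `U` and `V`, and the unknown
volumes of the spheres cancel against the case of exponent `0`. -/
lemma average_toSphere_quadratic (a b p q : ℝ) (k : ℕ)
    (hp : (finrank ℝ U : ℝ) / 2 = p) (hq : (finrank ℝ V : ℝ) / 2 = q) :
    ((volume : Measure (WithLp 2 (U × V))).toSphere.real Set.univ)⁻¹ *
        ∫ y, (a * ‖(y : WithLp 2 (U × V)).fst‖ ^ 2 + b * ‖(y : WithLp 2 (U × V)).snd‖ ^ 2) ^ k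
          ∂(volume : Measure (WithLp 2 (U × V))).toSphere =
      ∑ r ∈ Finset.range (k + 1),
        a ^ r * b ^ (k - r) * genBinom (-p) r * genBinom (-q) (k - r) / genBinom (-(p + q)) k := by
  have hp0 : 0 < p := by
    rw [← hp]; have := finrank_pos (R := ℝ) (M := U); positivity
  have hq0 : 0 < q := by
    rw [← hq]; have := finrank_pos (R := ℝ) (M := V); positivity
  have : Nontrivial (WithLp 2 (U × V)) := (WithLp.equiv 2 (U × V)).nontrivial
  have hdim : finrank ℝ (WithLp 2 (U × V)) = finrank ℝ U + finrank ℝ V := by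
    rw [(WithLp.linearEquiv 2 ℝ (U × V)).finrank_eq, finrank_prod]
  have hpq : ((finrank ℝ (WithLp 2 (U × V)) : ℕ) : ℝ) / 2 = p + q := by
    rw [hdim, ← hp, ← hq]; push_cast; ring
  set S := (volume : Measure (WithLp 2 (U × V))).toSphere with hS
  set A := (volume : Measure U).toSphere.real Set.univ with hA
  set B := (volume : Measure V).toSphere.real Set.univ with hB
  have key : ∀ (a b : ℝ) (k : ℕ),
      (∫ y, (a * ‖(y : WithLp 2 (U × V)).fst‖ ^ 2 + b * ‖(y : WithLp 2 (U × V)).snd‖ ^ 2) ^ k ∂S) *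
        (Real.Gamma (p + q + k) / 2) =
      ∑ r ∈ Finset.range (k + 1), (k.choose r : ℝ) * a ^ r * b ^ (k - r) *
        ((A * (Real.Gamma (p + r) / 2)) * (B * (Real.Gamma (q + (k - r : ℕ)) / 2))) := by
    intro a b k
    have h1 := integral_gaussian_homogeneous (E := WithLp 2 (U × V)) k
      (fun x => (a * ‖x.fst‖ ^ 2 + b * ‖x.snd‖ ^ 2) ^ k) (fun r x => by
        simp only [WithLp.smul_fst, WithLp.smul_snd, norm_smul, mul_pow, Real.norm_eq_abs, sq_abs]
        rw [pow_mul, ← mul_pow (r ^ 2)]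
        congr 1
        ring)
    rw [integral_radial, Nat.sub_add_cancel finrank_pos, hpq, integral_gaussian_quadratic] at h1
    rw [← h1]
    simp only [integral_gaussian_norm, hp, hq, hA, hB]
  have h0 := key a b 0
  have hk := key a b k
  simp only [pow_zero, integral_const, smul_eq_mul, mul_one, zero_add, Finset.range_one,
    Finset.sum_singleton, Nat.choose_self, Nat.cast_one, Nat.sub_self, Nat.cast_zero, add_zero,
    one_mul] at h0
  have hGp := Real.Gamma_pos_of_pos hp0
  have hGq := Real.Gamma_pos_of_pos hq0
  have hGs := Real.Gamma_pos_of_pos (add_pos hp0 hq0)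
  have hGk : 0 < Real.Gamma (p + q + k) := Real.Gamma_pos_of_pos (by positivity)
  have hSpos : S.real Set.univ ≠ 0 := by
    rw [measureReal_ne_zero_iff]
    exact fun h => Measure.toSphere_ne_zero volume (Measure.measure_univ_eq_zero.mp h)
  have hG := Gamma_eq_genBinom (p + q) (add_pos hp0 hq0) k
  have hbin : genBinom (-(p + q)) k ≠ 0 := by
    intro h; rw [h] at hG; simp at hG; exact hGk.ne' hG
  have hsum : ∑ r ∈ Finset.range (k + 1), (k.choose r : ℝ) * a ^ r * b ^ (k - r) *
        ((A * (Real.Gamma (p + r) / 2)) * (B * (Real.Gamma (q + (k - r : ℕ)) / 2))) =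
      S.real Set.univ * (Real.Gamma (p + q + k) / 2) * ∑ r ∈ Finset.range (k + 1),
        a ^ r * b ^ (k - r) * genBinom (-p) r * genBinom (-q) (k - r) /
          genBinom (-(p + q)) k := by
    rw [Finset.mul_sum]
    refine Finset.sum_congr rfl fun r hr => ?_
    have hrk : r ≤ k := by simpa [Nat.lt_succ_iff] using hr
    have hch : (k.choose r : ℝ) * r.factorial * (k - r).factorial = k.factorial := by
      exact_mod_cast Nat.choose_mul_factorial_mul_factorial hrk
    have hsign : (-1 : ℝ) ^ k = (-1) ^ r * (-1) ^ (k - r) := by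
      rw [← pow_add, Nat.add_sub_cancel' hrk]
    rw [hG, Gamma_eq_genBinom p hp0, Gamma_eq_genBinom q hq0, ← hch, hsign]
    field_simp
    linear_combination (-4 * (k.choose r : ℝ) * a ^ r * b ^ (k - r) * genBinom (-p) r *
      genBinom (-q) (k - r)) * h0
  rw [hsum] at hk
  rw [inv_mul_eq_iff_eq_mul₀ hSpos]
  have h2 : Real.Gamma (p + q + k) / 2 ≠ 0 := by positivity
  exact mul_right_cancel₀ h2 (hk.trans (by ring))

end Model

/-! ### Jacobi operators -/

section Jacobi

variable {V : Type*} [NormedAddCommGroup V] [InnerProductSpace ℝ V]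

/-- The Jacobi operator of `X` is self-adjoint. -/
lemma AlgCurvTensor.jacobi_symm (Rc : AlgCurvTensor V) (X Y Z : V) :
    ⟪Rc.R Y X X, Z⟫ = ⟪Rc.R Z X X, Y⟫ := by
  have hb : ∀ a b c d : V, ⟪Rc.R a b c, d⟫ + ⟪Rc.R b c a, d⟫ + ⟪Rc.R c a b, d⟫ = 0 := by
    intro a b c d
    rw [← inner_add_left, ← inner_add_left, Rc.bianchi, inner_zero_left]
  have ha : ∀ a b c d : V, ⟪Rc.R a b c, d⟫ = -⟪Rc.R b a c, d⟫ := by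
    intro a b c d
    rw [Rc.antisymm a b c, inner_neg_left]
  -- Summing the Bianchi identity over the four cyclic orders of `(Y, X, X, Z)` and using the two
  -- antisymmetries gives the pair symmetry.
  linarith [hb Y X X Z, hb X X Z Y, hb X Z Y X, hb Z Y X X, Rc.skew Y X X Z, Rc.skew X X Y Z,
    Rc.skew X Z X Y, Rc.skew X Z Y X, Rc.skew Z Y X X, Rc.skew Y X Z X, Rc.skew Z X X Y,
    Rc.skew X Y X Z, ha X Y X Z, ha Z X X Y, ha X X Y Z, ha X X Z Y, ha Z X Y X, ha Y X Z X,
    ha Z Y X X, ha Y X X Z]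

variable [FiniteDimensional ℝ V] [MeasurableSpace V] [BorelSpace V]

open Module

/-- The average of `⟪R(Y,X)X, Y⟫ ^ k` over the unit sphere of `X^⊥`, when `X^⊥` is spanned by two
eigenspaces `W₁`, `W₂` of the Jacobi operator of `X`. It depends only on the eigenvalues and
their multiplicities. -/
lemma inner_average_jacobi (Rc : AlgCurvTensor V) {X : V} (hX : ‖X‖ = 1) (W₁ W₂ : Submodule ℝ V)
    [Nontrivial W₁] [Nontrivial W₂]
    (hdim : finrank ℝ W₁ + finrank ℝ W₂ + 1 = finrank ℝ V)
    (h₁ : ∀ Y ∈ W₁, ⟪X, Y⟫ = 0) (h₂ : ∀ Y ∈ W₂, ⟪X, Y⟫ = 0) {a b : ℝ} (hab : a ≠ b)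
    (e₁ : ∀ Y ∈ W₁, Rc.R Y X X = a • Y) (e₂ : ∀ Y ∈ W₂, Rc.R Y X X = b • Y)
    {n : ℕ} (hn : finrank ℝ W₁ + finrank ℝ W₂ = n + 1) (k : ℕ) :
    (μH[(n : ℝ)] {Y : V | ‖Y‖ = 1 ∧ ⟪X, Y⟫ = 0}).toReal⁻¹ *
        ∫ Y in {Y : V | ‖Y‖ = 1 ∧ ⟪X, Y⟫ = 0}, ⟪Rc.R Y X X, Y⟫ ^ k ∂μH[(n : ℝ)] =
      ∑ r ∈ Finset.range (k + 1), a ^ r * b ^ (k - r) * genBinom (-((finrank ℝ W₁ : ℝ) / 2)) r *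
        genBinom (-((finrank ℝ W₂ : ℝ) / 2)) (k - r) /
        genBinom (-((finrank ℝ W₁ : ℝ) / 2 + (finrank ℝ W₂ : ℝ) / 2)) k := by
  have horth : ∀ u ∈ W₁, ∀ v ∈ W₂, ⟪u, v⟫ = 0 := by
    intro u hu v hv
    have h := Rc.jacobi_symm X u v
    rw [e₁ u hu, e₂ v hv, inner_smul_left, inner_smul_left, real_inner_comm u v] at h
    simp only [conj_trivial] at h
    have : (a - b) * ⟪u, v⟫ = 0 := by linear_combination h
    exact (mul_eq_zero.mp this).resolve_left (sub_ne_zero.mpr hab)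
  -- The orthogonal sum of the two eigenspaces parametrizes `X^⊥` isometrically.
  let f : WithLp 2 (W₁ × W₂) →ₗ[ℝ] V :=
    (W₁.subtype.coprod W₂.subtype) ∘ₗ (WithLp.linearEquiv 2 ℝ (W₁ × W₂)).toLinearMap
  have hf : ∀ x, f x = (x.fst : V) + (x.snd : V) := fun x => rfl
  have hnorm : ∀ x, ‖f x‖ = ‖x‖ := fun x => by
    rw [← sq_eq_sq₀ (norm_nonneg _) (norm_nonneg _), WithLp.prod_norm_sq_eq_of_L2, hf,
      norm_add_sq_real, horth _ x.fst.2 _ x.snd.2]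
    simp
  let L : WithLp 2 (W₁ × W₂) →ₗᵢ[ℝ] V := ⟨f, hnorm⟩
  have hfin : finrank ℝ (WithLp 2 (W₁ × W₂)) = finrank ℝ W₁ + finrank ℝ W₂ := by
    rw [(WithLp.linearEquiv 2 ℝ (W₁ × W₂)).finrank_eq, finrank_prod]
  have hX0 : X ≠ 0 := by rintro rfl; simp at hX
  have hrange : LinearMap.range f = (ℝ ∙ X)ᗮ := by
    refine Submodule.eq_of_le_of_finrank_eq ?_ ?_
    · rintro _ ⟨x, rfl⟩
      rw [Submodule.mem_orthogonal_singleton_iff_inner_right, hf, inner_add_right,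
        h₁ _ x.fst.2, h₂ _ x.snd.2, add_zero]
    · have : Fact (finrank ℝ V = (n + 1) + 1) := ⟨by omega⟩
      rw [LinearMap.finrank_range_of_inj L.injective, hfin, hn,
        Submodule.finrank_orthogonal_span_singleton (n := n + 1) hX0]
  have hset : {Y : V | ‖Y‖ = 1 ∧ ⟪X, Y⟫ = 0} = L '' Metric.sphere 0 1 := by
    ext Y
    constructor
    · rintro ⟨hY1, hY2⟩
      have : Y ∈ LinearMap.range f := by
        rw [hrange, Submodule.mem_orthogonal_singleton_iff_inner_right]; exact hY2
      obtain ⟨x, rfl⟩ := this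
      exact ⟨x, by rw [mem_sphere_zero_iff_norm, ← hnorm, hY1], rfl⟩
    · rintro ⟨x, hx, rfl⟩
      rw [mem_sphere_zero_iff_norm] at hx
      refine ⟨by rw [L.norm_map, hx], ?_⟩
      rw [← Submodule.mem_orthogonal_singleton_iff_inner_right (𝕜 := ℝ), ← hrange]
      exact ⟨x, rfl⟩
  have hsub : L '' Metric.sphere 0 1 ⊆ Set.range L := Set.image_subset_range _ _
  have hint : ∫ Y in L '' Metric.sphere 0 1, ⟪Rc.R Y X X, Y⟫ ^ k ∂μH[(n : ℝ)] =
      ∫ x in Metric.sphere (0 : WithLp 2 (W₁ × W₂)) 1, (a * ‖x.fst‖ ^ 2 + b * ‖x.snd‖ ^ 2) ^ k ∂μH[(n : ℝ)] := by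
    have hemb : MeasurableEmbedding L := L.isometry.isClosedEmbedding.measurableEmbedding
    rw [← Measure.restrict_restrict_of_subset hsub,
      ← L.isometry.map_hausdorffMeasure (Or.inl (by positivity)), hemb.setIntegral_map,
      Set.preimage_image_eq _ L.injective]
    congr 1
    funext x
    have hx : L x = (x.fst : V) + (x.snd : V) := rfl
    have hvu := horth _ x.fst.2 _ x.snd.2
    rw [hx, map_add, LinearMap.add_apply, LinearMap.add_apply, e₁ _ x.fst.2, e₂ _ x.snd.2]
    congr 1
    simp only [inner_add_left, inner_add_right, inner_smul_left, conj_trivial, hvu,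
      real_inner_comm (x.fst : V) (x.snd : V), real_inner_self_eq_norm_sq, Submodule.coe_norm]
    ring
  rw [hset, hint, L.isometry.hausdorffMeasure_image (Or.inl (by positivity)),
    average_hausdorff_eq_average_toSphere (hfin.trans hn)
      (fun x => (a * ‖x.fst‖ ^ 2 + b * ‖x.snd‖ ^ 2) ^ k) (by fun_prop)]
  exact average_toSphere_quadratic a b _ _ k rfl rfl

end Jacobi

/-- The moments of the sectional curvature of an algebraic curvature tensor on `ℝ^16`
whose Jacobi operators have, for every unit vector `X`, eigenvalue `4` with multiplicity
`7` and eigenvalue `1` with multiplicity `8` on `X^⊥` (as for the Cayley projective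
plane `𝕆P²` with curvatures in `[1,4]`). -/
theorem cayley_plane_moments (Rc : AlgCurvTensor (EuclideanSpace ℝ (Fin 16)))
    (hJac : ∀ X : EuclideanSpace ℝ (Fin 16), ‖X‖ = 1 →
      ∃ W₁ W₂ : Submodule ℝ (EuclideanSpace ℝ (Fin 16)),
        Module.finrank ℝ W₁ = 7 ∧ Module.finrank ℝ W₂ = 8 ∧
        (∀ Y ∈ W₁, ⟪X, Y⟫ = 0) ∧ (∀ Y ∈ W₂, ⟪X, Y⟫ = 0) ∧
        (∀ Y ∈ W₁, Rc.R Y X X = (4 : ℝ) • Y) ∧ (∀ Y ∈ W₂, Rc.R Y X X = Y))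
    (k : ℕ) :
    stiefelAvg 16 (fun X Y => ⟪Rc.R Y X X, Y⟫ ^ k) =
      ∑ r ∈ Finset.range (k + 1),
        4 ^ r * genBinom (-(7 / 2)) r * genBinom (-4) (k - r) / genBinom (-(15 / 2)) k := by
  set c : ℝ := ∑ r ∈ Finset.range (k + 1),
    4 ^ r * genBinom (-(7 / 2)) r * genBinom (-4) (k - r) / genBinom (-(15 / 2)) k with hc
  have hinner : ∀ X ∈ Metric.sphere (0 : EuclideanSpace ℝ (Fin 16)) 1,
      (μH[((16 : ℕ) : ℝ) - 2] {Y | ‖Y‖ = 1 ∧ ⟪X, Y⟫ = 0}).toReal⁻¹ *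
        ∫ Y in {Y | ‖Y‖ = 1 ∧ ⟪X, Y⟫ = 0}, ⟪Rc.R Y X X, Y⟫ ^ k ∂μH[((16 : ℕ) : ℝ) - 2] = c := by
    intro X hX
    rw [mem_sphere_zero_iff_norm] at hX
    obtain ⟨W₁, W₂, d₁, d₂, h₁, h₂, e₁, e₂⟩ := hJac X hX
    have : Nontrivial W₁ := Module.nontrivial_of_finrank_pos (R := ℝ) (by omega)
    have : Nontrivial W₂ := Module.nontrivial_of_finrank_pos (R := ℝ) (by omega)
    have h := inner_average_jacobi Rc hX W₁ W₂ (by rw [d₁, d₂, finrank_euclideanSpace_fin]) h₁ h₂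
      (a := 4) (b := 1) (by norm_num) e₁ (by simpa using e₂) (n := 14) (by rw [d₁, d₂]) k
    rw [d₁, d₂] at h
    rw [show ((16 : ℕ) : ℝ) - 2 = ((14 : ℕ) : ℝ) by norm_num, h, hc]
    refine Finset.sum_congr rfl fun r _ => ?_
    norm_num
  have hdim : Module.finrank ℝ (EuclideanSpace ℝ (Fin 16)) = 15 + 1 := finrank_euclideanSpace_fin
  have hpos := hausdorffMeasure_sphere_pos hdim
  have htop := hausdorffMeasure_sphere_lt_top hdim
  rw [show ((15 : ℕ) : ℝ) = ((16 : ℕ) : ℝ) - 1 by norm_num] at hpos htop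
  rw [stiefelAvg, setIntegral_congr_fun Metric.isClosed_sphere.measurableSet hinner,
    setIntegral_const, smul_eq_mul, measureReal_def, ← mul_assoc,
    inv_mul_cancel₀ (ENNReal.toReal_pos hpos.ne' htop.ne).ne', one_mul]
end

section
/- Let n ≥ 1 and k_0, k_1, …, k_n ∈ ℕ. Then ∫_{Δ_n} x_0^{k_0} x_1^{k_1} ⋯ x_n^{k_n} dx_1 ⋯ dx_n = (k_0! · k_1! ⋯ k_n!) / (n + k_0 + k_1 + ⋯ + k_n)!, where Δ_n := { (x_1,…,x_n) ∈ ℝ^n : x_1,…,x_n ≥ 0 and x_1 + ⋯ + x_n ≤ 1 } is the standard n-simplex with Lebesgue measure and x_0 := 1 − x_1 − ⋯ − x_n. -/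
/-!
The formula is the case `s = 1` of a homogeneous statement about the dilated simplex
`{x | 0 ≤ xᵢ, ∑ xᵢ ≤ s}`: the integral of `(s - ∑ xᵢ) ^ k₀ * ∏ xᵢ ^ kᵢ` over it equals
`k₀! ∏ kᵢ! / (n + k₀ + ∑ kᵢ)! * s ^ (n + k₀ + ∑ kᵢ)`.
This is proved by induction on `n`: fixing the first coordinate `t ∈ [0, s]`, the slice is the
simplex of size `s - t` in one dimension less, so by Fubini and the induction hypothesis what
remains is the one-dimensional beta integral `∫₀ˢ t ^ a (s - t) ^ b dt`, evaluated by repeated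
integration by parts (`integral_pow_mul_sub_pow`). Starting from `n = 0`, where the integral is
`s ^ k₀`, is possible because Lebesgue measure on `Fin 0 → ℝ` is a Dirac mass.
-/

open MeasureTheory

/-- The standard `n`-simplex `Δ_n ⊂ ℝ^n`. -/
def stdSimplex' (n : ℕ) : Set (Fin n → ℝ) :=
  {x : Fin n → ℝ | (∀ i, 0 ≤ x i) ∧ ∑ i, x i ≤ 1}

/-- The beta integral `∫₀ˢ t ^ a (s - t) ^ b dt` at natural exponents. -/
theorem integral_pow_mul_sub_pow (s : ℝ) (a b : ℕ) :
    ∫ t in (0 : ℝ)..s, t ^ a * (s - t) ^ b =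
      (a.factorial * b.factorial : ℝ) / ((a + b + 1).factorial : ℝ) * s ^ (a + b + 1) := by
  induction b generalizing a with
  | zero =>
    have h : ((a.factorial : ℕ) : ℝ) ≠ 0 := by exact_mod_cast a.factorial_ne_zero
    have h' : (a : ℝ) + 1 ≠ 0 := by positivity
    simp only [pow_zero, mul_one, integral_pow, Nat.factorial_zero, add_zero, Nat.factorial_succ,
      ne_eq, Nat.succ_ne_zero, not_false_eq_true, zero_pow]
    push_cast
    field_simp
    simp
  | succ b ih =>
    have key : ∫ t in (0 : ℝ)..s, ((a + 1 : ℝ) * (t ^ a * (s - t) ^ (b + 1))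
        - (b + 1 : ℝ) * (t ^ (a + 1) * (s - t) ^ b)) = 0 := by
      rw [intervalIntegral.integral_eq_sub_of_hasDerivAt
        (f := fun t => t ^ (a + 1) * (s - t) ^ (b + 1))]
      · simp
      · intro t _
        have h1 := (hasDerivAt_id t).pow (a + 1)
        have h2 := ((hasDerivAt_id t).const_sub s).pow (b + 1)
        refine (h1.mul h2).congr_deriv ?_
        simp
        ring
      · exact Continuous.intervalIntegrable (by fun_prop) _ _
    rw [intervalIntegral.integral_sub (Continuous.intervalIntegrable (by fun_prop) _ _)
      (Continuous.intervalIntegrable (by fun_prop) _ _), intervalIntegral.integral_const_mul,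
      intervalIntegral.integral_const_mul, ih (a + 1)] at key
    have h' : (a : ℝ) + 1 ≠ 0 := by positivity
    apply mul_left_cancel₀ h'
    rw [sub_eq_zero.mp key, show a + 1 + b + 1 = a + (b + 1) + 1 by ring]
    rw [Nat.factorial_succ a, Nat.factorial_succ b]
    push_cast
    ring

/-- The simplex `{x | 0 ≤ xᵢ, ∑ xᵢ ≤ s}`, i.e. the standard simplex dilated by `s` when `s ≥ 0`. -/
def scaledSimplex (n : ℕ) (s : ℝ) : Set (Fin n → ℝ) :=
  {x : Fin n → ℝ | (∀ i, 0 ≤ x i) ∧ ∑ i, x i ≤ s}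

theorem isClosed_scaledSimplex (n : ℕ) (s : ℝ) : IsClosed (scaledSimplex n s) := by
  have : scaledSimplex n s = (⋂ i, {x : Fin n → ℝ | 0 ≤ x i}) ∩ {x | ∑ i, x i ≤ s} := by
    ext x; simp [scaledSimplex]
  rw [this]
  exact (isClosed_iInter fun i => isClosed_le (by fun_prop) (by fun_prop)).inter
    (isClosed_le (by fun_prop) (by fun_prop))

theorem isCompact_scaledSimplex (n : ℕ) (s : ℝ) : IsCompact (scaledSimplex n s) := by
  refine (isCompact_Icc (a := (0 : Fin n → ℝ)) (b := fun _ => s)).of_isClosed_subset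
    (isClosed_scaledSimplex n s) ?_
  rintro x ⟨h0, h1⟩
  exact ⟨h0, fun i =>
    (Finset.single_le_sum (fun j _ => h0 j) (Finset.mem_univ i)).trans h1⟩

theorem cons_mem_scaledSimplex {n : ℕ} {s t : ℝ} {y : Fin n → ℝ} :
    (Fin.cons t y : Fin (n + 1) → ℝ) ∈ scaledSimplex (n + 1) s ↔
      t ∈ Set.Icc 0 s ∧ y ∈ scaledSimplex n (s - t) := by
  simp only [scaledSimplex, Set.mem_ofPred_eq, Fin.forall_fin_succ, Fin.cons_zero, Fin.cons_succ,
    Fin.sum_univ_succ, Set.mem_Icc]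
  constructor
  · rintro ⟨⟨h0, h1⟩, h2⟩
    have := Finset.sum_nonneg (fun i (_ : i ∈ Finset.univ) => h1 i)
    exact ⟨⟨h0, by linarith⟩, h1, by linarith⟩
  · rintro ⟨⟨h0, _⟩, h1, h2⟩
    exact ⟨⟨h0, h1⟩, by linarith⟩

/-- The homogeneous form of the monomial integral, which is stable under slicing. -/
theorem integral_scaledSimplex (n : ℕ) (k₀ : ℕ) (k : Fin n → ℕ) (s : ℝ) (hs : 0 ≤ s) :
    ∫ x in scaledSimplex n s, (s - ∑ i, x i) ^ k₀ * ∏ i, x i ^ k i =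
      ((Nat.factorial k₀ : ℝ) * ∏ i, (Nat.factorial (k i) : ℝ)) /
        (Nat.factorial (n + k₀ + ∑ i, k i) : ℝ) * s ^ (n + k₀ + ∑ i, k i) := by
  induction n generalizing s with
  | zero =>
    have h : ((k₀.factorial : ℕ) : ℝ) ≠ 0 := by exact_mod_cast k₀.factorial_ne_zero
    have hu : scaledSimplex 0 s = Set.univ := by
      ext x; simp [scaledSimplex, hs]
    simp [hu, h, volume_pi, Measure.pi_of_empty (x := (0 : Fin 0 → ℝ))]
  | succ n ih =>
    set f : (Fin (n + 1) → ℝ) → ℝ := fun x => (s - ∑ i, x i) ^ k₀ * ∏ i, x i ^ k i with hf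
    have hfc : Continuous f := by fun_prop
    have hint : Integrable ((scaledSimplex (n + 1) s).indicator f) :=
      (integrable_indicator_iff (isClosed_scaledSimplex _ _).measurableSet).2
        (hfc.continuousOn.integrableOn_compact (isCompact_scaledSimplex _ _))
    have mp := (volume_preserving_piFinSuccAbove (fun _ : Fin (n + 1) => ℝ) 0).symm
    rw [← integral_indicator (isClosed_scaledSimplex _ _).measurableSet,
      ← mp.integral_comp (MeasurableEquiv.measurableEmbedding _), Measure.volume_eq_prod]
    change ∫ z, ((scaledSimplex (n + 1) s).indicator f ∘
      (MeasurableEquiv.piFinSuccAbove (fun _ : Fin (n + 1) => ℝ) 0).symm) z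
        ∂(volume.prod volume) = _
    rw [integral_prod _ ((mp.integrable_comp_emb (MeasurableEquiv.measurableEmbedding _)).2 hint)]
    have inner : ∀ t : ℝ, (∫ y : Fin n → ℝ, (scaledSimplex (n + 1) s).indicator f
        ((MeasurableEquiv.piFinSuccAbove (fun _ : Fin (n + 1) => ℝ) 0).symm (t, y))) =
        (Set.Icc 0 s).indicator (fun t =>
          ((Nat.factorial k₀ : ℝ) * ∏ i : Fin n, (Nat.factorial (k i.succ) : ℝ)) /
          (Nat.factorial (n + k₀ + ∑ i : Fin n, k i.succ) : ℝ) *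
          (t ^ k 0 * (s - t) ^ (n + k₀ + ∑ i : Fin n, k i.succ))) t := by
      intro t
      have hcons : ∀ y : Fin n → ℝ,
          (MeasurableEquiv.piFinSuccAbove (fun _ : Fin (n + 1) => ℝ) 0).symm (t, y) =
            (Fin.cons t y : Fin (n + 1) → ℝ) := by
        intro y
        simp [MeasurableEquiv.piFinSuccAbove]
        rfl
      simp only [hcons]
      by_cases ht : t ∈ Set.Icc 0 s
      · have hslice : ∀ y : Fin n → ℝ,
            (scaledSimplex (n + 1) s).indicator f (Fin.cons t y : Fin (n + 1) → ℝ) =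
            t ^ k 0 * (scaledSimplex n (s - t)).indicator
              (fun y => (s - t - ∑ i, y i) ^ k₀ * ∏ i, y i ^ k i.succ) y := by
          intro y
          by_cases hy : y ∈ scaledSimplex n (s - t)
          · rw [Set.indicator_of_mem (cons_mem_scaledSimplex.2 ⟨ht, hy⟩),
              Set.indicator_of_mem hy]
            simp only [hf, Fin.sum_univ_succ, Fin.prod_univ_succ, Fin.cons_zero, Fin.cons_succ]
            ring
          · rw [Set.indicator_of_notMem fun h => hy (cons_mem_scaledSimplex.1 h).2,
              Set.indicator_of_notMem hy, mul_zero]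
        simp only [hslice]
        rw [integral_const_mul, integral_indicator (isClosed_scaledSimplex _ _).measurableSet,
          ih (fun i => k i.succ) (s - t) (sub_nonneg.2 ht.2), Set.indicator_of_mem ht]
        ring
      · rw [Set.indicator_of_notMem ht]
        refine integral_eq_zero_of_ae (.of_forall fun y => ?_)
        exact Set.indicator_of_notMem (fun h => ht (cons_mem_scaledSimplex.1 h).1) _
    simp only [Function.comp_apply, inner]
    rw [integral_indicator measurableSet_Icc, integral_const_mul, integral_Icc_eq_integral_Ioc,
      ← intervalIntegral.integral_of_le hs, integral_pow_mul_sub_pow, Fin.prod_univ_succ,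
      Fin.sum_univ_succ, show n + 1 + k₀ + (k 0 + ∑ i : Fin n, k i.succ) =
        k 0 + (n + k₀ + ∑ i : Fin n, k i.succ) + 1 by ring]
    have h : ((n + k₀ + ∑ i : Fin n, k i.succ).factorial : ℝ) ≠ 0 := by
      exact_mod_cast Nat.factorial_ne_zero _
    field_simp

/-- Integration of monomials over the standard simplex:
`∫_{Δ_n} x_0^{k_0} x_1^{k_1} ⋯ x_n^{k_n} dx = k_0! k_1! ⋯ k_n! / (n + k_0 + ⋯ + k_n)!`
where `x_0 = 1 − x_1 − ⋯ − x_n`. -/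
theorem integral_monomial_over_simplex (n : ℕ) (hn : 1 ≤ n) (k₀ : ℕ) (k : Fin n → ℕ) :
    ∫ x in stdSimplex' n, (1 - ∑ i, x i) ^ k₀ * ∏ i, x i ^ k i =
      ((Nat.factorial k₀ : ℝ) * ∏ i, (Nat.factorial (k i) : ℝ)) /
        (Nat.factorial (n + k₀ + ∑ i, k i) : ℝ) := by
  have h := integral_scaledSimplex n k₀ k 1 zero_le_one
  rw [one_pow, mul_one] at h
  exact h
end

section
/- Let m ≥ 2 and n ≥ 1 be integers, μ > 0 a real number and k ∈ ℕ. Then ((m+n−2)!/((m−2)!(n−1)!)) · (1/(2μ)) · ∫_0^μ (s/μ)^{(m−3)/2} · (1 − (s/μ)^{1/2})^{n−1} · s^k ds = ((m+n−2)! · (m+2k−2)!)/((m−2)! · (m+n+2k−2)!) · μ^k. In particular (k = 0) the function s ↦ ((m+n−2)!/((m−2)!(n−1)!)) · (s/μ)^{(m−3)/2}(1−(s/μ)^{1/2})^{n−1}/(2μ) is a probability density on [0, μ]. -/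
/-!
The substitution `s = μ t²`, which is monotone on `[0, 1]`, gives `√(s/μ) = t` and
`ds = 2 μ t dt`. The extra factor `t` absorbs the singularity that is present for `m = 2`, and the
integral becomes `2 μ^(k+1) ∫₀¹ t^(m+2k-2) (1-t)^(n-1) dt`, a Beta integral with integer
parameters, whose value is a quotient of factorials (`integral_pow_mul_one_sub_pow`).
-/

/-- Euler's Beta integral `B(a + 1, b + 1)` for natural numbers `a`, `b`. -/
lemma integral_pow_mul_one_sub_pow (a b : ℕ) :
    ∫ t in (0 : ℝ)..1, t ^ a * (1 - t) ^ b =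
      (Nat.factorial a : ℝ) * (Nat.factorial b : ℝ) / (Nat.factorial (a + b + 1) : ℝ) := by
  have hB : Complex.betaIntegral (a + 1) (b + 1) =
      ((∫ t in (0 : ℝ)..1, t ^ a * (1 - t) ^ b : ℝ) : ℂ) := by
    rw [Complex.betaIntegral, ← intervalIntegral.integral_ofReal]
    refine intervalIntegral.integral_congr fun t _ => ?_
    simp
  have hG := Complex.Gamma_mul_Gamma_eq_betaIntegral (s := (a : ℂ) + 1) (t := (b : ℂ) + 1)
    (by simp; positivity) (by simp; positivity)
  have hsum : (a : ℂ) + 1 + (b + 1) = ((a + b + 1 : ℕ) : ℂ) + 1 := by push_cast; ring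
  rw [hB, hsum, Complex.Gamma_nat_eq_factorial, Complex.Gamma_nat_eq_factorial,
    Complex.Gamma_nat_eq_factorial] at hG
  rw [eq_div_iff (by positivity), mul_comm]
  exact_mod_cast hG.symm

/-- The unnormalised moment integral, written with `m = p + 2` and `n = q + 1`. -/
lemma integral_sqrt_eq_beta (p q k : ℕ) {μ : ℝ} (hμ : 0 < μ) :
    ∫ s in (0 : ℝ)..μ,
        Real.sqrt (s / μ) ^ ((p : ℤ) - 1) * (1 - Real.sqrt (s / μ)) ^ q * s ^ k =
      2 * μ ^ (k + 1) * ∫ t in (0 : ℝ)..1, t ^ (p + 2 * k) * (1 - t) ^ q := by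
  -- This form of the substitution rule needs no integrability, so `p = 0` is no special case.
  have hsub := intervalIntegral.integral_comp_mul_deriv_of_deriv_nonneg (a := 0) (b := 1)
    (f := fun t : ℝ => μ * t ^ 2) (f' := fun t => μ * (2 * t))
    (g := fun s => Real.sqrt (s / μ) ^ ((p : ℤ) - 1) * (1 - Real.sqrt (s / μ)) ^ q * s ^ k)
    (by fun_prop)
    (fun t _ => by simpa using (hasDerivAt_pow 2 t).const_mul μ)
    (fun t ht => by
      have : 0 < t := by simpa using ht.1
      positivity)
  simp only [ne_eq, OfNat.ofNat_ne_zero, not_false_eq_true, zero_pow, mul_zero, one_pow,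
    mul_one] at hsub
  rw [← hsub, ← intervalIntegral.integral_const_mul]
  -- At `t = 0` the integrands may differ: there `0 ^ (-1) = 0` when `p = 0`.
  refine intervalIntegral.integral_congr_ae (Filter.Eventually.of_forall fun t ht => ?_)
  rw [Set.uIoc_of_le zero_le_one] at ht
  have ht0 : 0 < t := ht.1
  have hsqrt : Real.sqrt (μ * t ^ 2 / μ) = t := by
    rw [mul_div_cancel_left₀ _ hμ.ne', Real.sqrt_sq ht0.le]
  simp only [Function.comp_apply, hsqrt]
  rw [zpow_sub_one₀ ht0.ne', zpow_natCast]
  field_simp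
  ring

/-- The moments of the density `ρ^{m,n}_{μ,0}` on `[0,μ]` describing the
sectional-curvature distribution of a Riemannian product of an `m`-dimensional manifold
of constant curvature `μ` with an `n`-dimensional flat factor; the case `k = 0` says it
is a probability density. -/
theorem moments_of_product_density (m n : ℕ) (hm : 2 ≤ m) (hn : 1 ≤ n) (μ : ℝ)
    (hμ : 0 < μ) (k : ℕ) :
    ((Nat.factorial (m + n - 2) : ℝ) /
          ((Nat.factorial (m - 2) : ℝ) * (Nat.factorial (n - 1) : ℝ))) *
        (1 / (2 * μ)) *
        ∫ s in (0 : ℝ)..μ,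
          Real.sqrt (s / μ) ^ ((m : ℤ) - 3) * (1 - Real.sqrt (s / μ)) ^ (n - 1) * s ^ k =
      ((Nat.factorial (m + n - 2) : ℝ) * (Nat.factorial (m + 2 * k - 2) : ℝ)) /
          ((Nat.factorial (m - 2) : ℝ) * (Nat.factorial (m + n + 2 * k - 2) : ℝ)) *
        μ ^ k := by
  obtain ⟨p, rfl⟩ := Nat.exists_eq_add_of_le' hm
  obtain ⟨q, rfl⟩ := Nat.exists_eq_add_of_le' hn
  have h1 : ((p + 2 : ℕ) : ℤ) - 3 = (p : ℤ) - 1 := by push_cast; ring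
  have h2 : p + 2 + 2 * k - 2 = p + 2 * k := by omega
  have h3 : p + 2 + (q + 1) + 2 * k - 2 = p + 2 * k + q + 1 := by omega
  rw [h1, h2, h3, Nat.add_sub_cancel, Nat.add_sub_cancel, integral_sqrt_eq_beta p q k hμ,
    integral_pow_mul_one_sub_pow]
  have hp := Nat.factorial_ne_zero p
  have hq := Nat.factorial_ne_zero q
  have hpq := Nat.factorial_ne_zero (p + 2 * k + q + 1)
  field_simp
  ring
end

section
/- Let n ≥ 2 and regard ℂ^n as a 2n-dimensional real inner product space with ⟨x,y⟩ := Re(∑_{j=1}^n conj(x_j) y_j). For every continuous function F : ℝ → ℝ, the Stiefel average of (X,Y) ↦ F(1 + 3⟨Y, iX⟩²) over orthonormal pairs (the sectional curvature of the normalized Fubini–Study metric on ℂP^n on the plane spanned by X and Y being 1 + 3⟨Y,iX⟩²) equals (1/6) · C(n − 3/2, n − 2) · ∫_1^4 ((s−1)/3)^{−1/2} · ((4−s)/3)^{n−2} · F(s) ds. -/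
/-!
Fix a unit vector `X`. Since `e = iX` is a unit vector of `Xᗮ`, the inner average is the average of
the zonal function `Y ↦ g ⟪Y, e⟫`, `g u = F (1 + 3 u²)`, over a unit sphere of dimension
`k + 1 = 2n - 2`, and it equals
`(∫ θ in 0..π, sin θ ^ k * g (cos θ)) / ∫ θ in 0..π, sin θ ^ k`.
This does not depend on `X`, so the outer average is trivial, provided that the Hausdorff measure of
the unit sphere is positive and finite: finiteness comes from inverse stereographic projection,
which is Lipschitz on balls, and positivity from the orthogonal projection of the sphere onto the
unit ball of a hyperplane. The substitution `s = 1 + 3 cos² θ` (`integral_sin_pow_mul_cos`) and the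
Wallis product (`genBinom_mul_integral_sin_pow`) then give the density on `[1, 4]`.

The formula for the zonal average (`orthogonal_sphere_average`) avoids any explicit comparison
between Hausdorff measure on the sphere and the surface measure of polar coordinates. Integrating
`g (⟪x, y⟫ / ‖y‖)` over `x` in the sphere and `y` in the unit ball in both orders, and using that
Hausdorff and Lebesgue measure are invariant under linear isometries, shows that the average over
the sphere equals an average over the ball (`zonal_average`). In the model space
`ℝ × ℝ^(k+1)` with pole `(1, 0)` the latter is computed by polar coordinates in the second factor,
followed by polar coordinates in the half plane (`ball_integral_zonal`); the constant
factors are eliminated by comparison with `g = 1` (`sphere_average_fst`). A linear isometry from the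
model space onto `Xᗮ` taking the pole to `e` transports the result.
-/

open MeasureTheory RealInnerProductSpace
open scoped Real

/-- `ℂ^n` regarded as a real inner product space, with `⟪x,y⟫_ℝ = Re ∑ conj(x_j) y_j`. -/
noncomputable instance (n : ℕ) : InnerProductSpace ℝ (EuclideanSpace ℂ (Fin n)) :=
  InnerProductSpace.complexToReal

noncomputable instance (n : ℕ) : MeasurableSpace (EuclideanSpace ℂ (Fin n)) := borel _

instance (n : ℕ) : BorelSpace (EuclideanSpace ℂ (Fin n)) := ⟨rfl⟩

/-! ### Hausdorff measure of the unit sphere and zonal averages -/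

/-- Unit vectors (indeed vectors of equal norm) are exchanged by a linear isometry. -/
lemma exists_isometryEquiv_apply_eq {E : Type*} [NormedAddCommGroup E] [InnerProductSpace ℝ E]
    {e f : E} (h : ‖e‖ = ‖f‖) : ∃ R : E ≃ₗᵢ[ℝ] E, R e = f :=
  ⟨_, Submodule.reflection_sub h⟩

lemma finrank_orth {E : Type*} [NormedAddCommGroup E] [InnerProductSpace ℝ E]
    {d : ℕ} (hd : Module.finrank ℝ E = d + 1) {v : E} (hv : ‖v‖ = 1) :
    Module.finrank ℝ (ℝ ∙ v)ᗮ = d := by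
  have : Fact (Module.finrank ℝ E = d + 1) := ⟨hd⟩
  exact Submodule.finrank_orthogonal_span_singleton (by rintro rfl; simp at hv)

section Sphere

variable {E : Type*} [NormedAddCommGroup E] [InnerProductSpace ℝ E] [FiniteDimensional ℝ E]
  [MeasurableSpace E] [BorelSpace E]

/-- A closed hemisphere is the image of a ball of radius `2` under inverse stereographic
projection, which is Lipschitz there. -/
lemma hausdorffMeasure_hemisphere_lt_top {d : ℕ} (hd : Module.finrank ℝ E = d + 1)
    {v : E} (hv : ‖v‖ = 1) :
    μH[(d : ℝ)] {x : E | ‖x‖ = 1 ∧ ⟪v, x⟫ ≤ 0} < ⊤ := by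
  have hfin := finrank_orth hd hv
  set f : (ℝ ∙ v)ᗮ → E := fun w => stereoInvFunAux v (w : E) with hf
  have hfc : ContDiff ℝ 1 f := contDiff_stereoInvFunAux.comp (ℝ ∙ v)ᗮ.subtypeL.contDiff
  have hK : IsCompact (Metric.closedBall (0 : (ℝ ∙ v)ᗮ) 2) := isCompact_closedBall _ _
  obtain ⟨C, hC⟩ := (hfc.locallyLipschitz.locallyLipschitzOn
    (s := Metric.closedBall (0 : (ℝ ∙ v)ᗮ) 2)).exists_lipschitzOnWith_of_compact hK
  have hsub : {x : E | ‖x‖ = 1 ∧ ⟪v, x⟫ ≤ 0} ⊆ f '' Metric.closedBall 0 2 := by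
    rintro x ⟨hx, hvx⟩
    have hne : x ≠ v := by
      rintro rfl
      rw [real_inner_self_eq_norm_sq, hx] at hvx
      norm_num at hvx
    refine ⟨stereoToFun v x, ?_, ?_⟩
    · rw [mem_closedBall_zero_iff, stereoToFun_apply, norm_smul, innerSL_apply_apply]
      have h1 : ‖(ℝ ∙ v)ᗮ.orthogonalProjectionOnto x‖ ≤ 1 := by
        simpa [hx] using (ℝ ∙ v)ᗮ.norm_orthogonalProjectionOnto_apply_le x
      have h2 : ‖2 / (1 - ⟪v, x⟫)‖ ≤ 2 := by
        rw [Real.norm_of_nonneg (by apply div_nonneg <;> linarith), div_le_iff₀ (by linarith)]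
        linarith
      nlinarith [norm_nonneg ((ℝ ∙ v)ᗮ.orthogonalProjectionOnto x), norm_nonneg (2 / (1 - ⟪v, x⟫))]
    · have := stereo_left_inv hv (x := ⟨x, by simpa using hx⟩) hne
      exact congrArg Subtype.val this
  refine (measure_mono hsub).trans_lt ((hC.hausdorffMeasure_image_le (by positivity)).trans_lt ?_)
  refine ENNReal.mul_lt_top (ENNReal.rpow_lt_top_of_nonneg (by positivity) (by simp)) ?_
  rw [← hfin]
  exact hK.measure_lt_top

lemma hausdorffMeasure_sphere_lt_top_s17 {d : ℕ} (hd : Module.finrank ℝ E = d + 1) :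
    μH[(d : ℝ)] (Metric.sphere (0 : E) 1) < ⊤ := by
  have : Nontrivial E := Module.nontrivial_of_finrank_pos (R := ℝ) (by omega)
  obtain ⟨v, hv⟩ := exists_norm_eq E zero_le_one
  have hsub : Metric.sphere (0 : E) 1 ⊆
      {x : E | ‖x‖ = 1 ∧ ⟪v, x⟫ ≤ 0} ∪ {x : E | ‖x‖ = 1 ∧ ⟪-v, x⟫ ≤ 0} := by
    intro x hx
    rw [mem_sphere_zero_iff_norm] at hx
    rcases le_total ⟪v, x⟫ 0 with h | h
    · exact Or.inl ⟨hx, h⟩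
    · exact Or.inr ⟨hx, by rw [inner_neg_left]; linarith⟩
  refine (measure_mono hsub).trans_lt ((measure_union_le _ _).trans_lt ?_)
  exact ENNReal.add_lt_top.2 ⟨hausdorffMeasure_hemisphere_lt_top hd hv,
    hausdorffMeasure_hemisphere_lt_top hd (by rwa [norm_neg])⟩

/-- Orthogonal projection to a hyperplane is `1`-Lipschitz and maps the unit sphere onto the unit
ball of the hyperplane. -/
lemma hausdorffMeasure_sphere_pos_s17 {d : ℕ} (hd : Module.finrank ℝ E = d + 1) :
    0 < μH[(d : ℝ)] (Metric.sphere (0 : E) 1) := by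
  have : Nontrivial E := Module.nontrivial_of_finrank_pos (R := ℝ) (by omega)
  obtain ⟨v, hv⟩ := exists_norm_eq E zero_le_one
  have hfin := finrank_orth hd hv
  refine lt_of_lt_of_le ?_ (hausdorffMeasure_orthogonalProjectionOnto_le (ℝ ∙ v)ᗮ d
    (Metric.sphere (0 : E) 1) (by positivity))
  have hsub : Metric.ball (0 : (ℝ ∙ v)ᗮ) 1 ⊆
      (ℝ ∙ v)ᗮ.orthogonalProjectionOnto '' Metric.sphere (0 : E) 1 := by
    intro w hw
    rw [mem_ball_zero_iff] at hw
    have hwv : ⟪(w : E), v⟫ = 0 := Submodule.mem_orthogonal_singleton_iff_inner_left.1 w.2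
    refine ⟨w + √(1 - ‖w‖ ^ 2) • v, ?_, ?_⟩
    · have h0 : 0 ≤ 1 - ‖w‖ ^ 2 := by nlinarith [norm_nonneg w]
      have : ‖(w : E) + √(1 - ‖w‖ ^ 2) • v‖ ^ 2 = 1 := by
        rw [norm_add_sq_real, inner_smul_right, hwv, norm_smul, mul_pow, hv, Real.norm_eq_abs,
          sq_abs, Real.sq_sqrt h0, Submodule.coe_norm]
        ring
      rw [mem_sphere_zero_iff_norm]
      exact (pow_eq_one_iff_of_nonneg (norm_nonneg _) two_ne_zero).1 this
    · have : (ℝ ∙ v)ᗮ.orthogonalProjectionOnto v = 0 := by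
        apply Submodule.orthogonalProjectionOnto_orthogonal_apply_eq_zero
        exact Submodule.mem_span_singleton_self v
      simp [this]
  refine lt_of_lt_of_le ?_ (measure_mono hsub)
  rw [← hfin]
  exact Metric.measure_ball_pos _ _ one_pos

/-- Averages of zonal functions over the unit sphere coincide with averages of their
`0`-homogeneous extensions over the unit ball. -/
lemma zonal_average {d : ℕ} (hd : Module.finrank ℝ E = d + 1) {g : ℝ → ℝ} (hg : Continuous g)
    {C : ℝ} (hC : ∀ u, ‖g u‖ ≤ C) {e : E} (he : ‖e‖ = 1) :
    volume.real (Metric.ball (0 : E) 1) * ∫ x in Metric.sphere (0 : E) 1, g ⟪x, e⟫ ∂μH[(d : ℝ)] =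
      (μH[(d : ℝ)]).real (Metric.sphere (0 : E) 1) *
        ∫ y in Metric.ball (0 : E) 1, g (⟪y, e⟫ / ‖y‖) := by
  have : Nontrivial E := Module.nontrivial_of_finrank_pos (R := ℝ) (by omega)
  have : IsFiniteMeasure ((μH[(d : ℝ)] : Measure E).restrict (Metric.sphere (0 : E) 1)) :=
    ⟨by simpa using hausdorffMeasure_sphere_lt_top_s17 hd⟩
  have : IsFiniteMeasure ((volume : Measure E).restrict (Metric.ball (0 : E) 1)) :=
    ⟨by simpa using measure_ball_lt_top⟩
  have hmeas : Measurable (fun p : E × E => g (⟪p.1, p.2⟫ / ‖p.2‖)) :=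
    hg.measurable.comp ((measurable_fst.inner measurable_snd).div measurable_snd.norm)
  have hint : Integrable (Function.uncurry fun x y : E => g (⟪x, y⟫ / ‖y‖))
      (((μH[(d : ℝ)] : Measure E).restrict (Metric.sphere (0 : E) 1)).prod
        ((volume : Measure E).restrict (Metric.ball (0 : E) 1))) :=
    Integrable.of_bound hmeas.aestronglyMeasurable C (Filter.Eventually.of_forall fun p => hC _)
  have hswap := integral_integral_swap hint
  have h1 : ∀ x ∈ Metric.sphere (0 : E) 1, ∫ y in Metric.ball (0 : E) 1, g (⟪x, y⟫ / ‖y‖) =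
      ∫ y in Metric.ball (0 : E) 1, g (⟪y, e⟫ / ‖y‖) := by
    intro x hx
    obtain ⟨R, hR⟩ := exists_isometryEquiv_apply_eq (e := e) (f := x)
      (by rw [he, mem_sphere_zero_iff_norm.1 hx])
    rw [← R.measurePreserving.setIntegral_preimage_emb
      R.toHomeomorph.measurableEmbedding (fun y => g (⟪x, y⟫ / ‖y‖))]
    have : R ⁻¹' Metric.ball (0 : E) 1 = Metric.ball 0 1 := by ext; simp
    rw [this]
    simp_rw [← hR, R.inner_map_map, R.norm_map, real_inner_comm]
  have h2 : ∀ y : E, y ≠ 0 → ∫ x in Metric.sphere (0 : E) 1, g (⟪x, y⟫ / ‖y‖) ∂μH[(d : ℝ)] =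
      ∫ x in Metric.sphere (0 : E) 1, g ⟪x, e⟫ ∂μH[(d : ℝ)] := by
    intro y hy
    have hy' : ‖y‖ ≠ 0 := norm_ne_zero_iff.2 hy
    obtain ⟨R, hR⟩ := exists_isometryEquiv_apply_eq (e := e) (f := ‖y‖⁻¹ • y)
      (by rw [he, norm_smul, norm_inv, norm_norm, inv_mul_cancel₀ hy'])
    rw [← (R.toIsometryEquiv.measurePreserving_hausdorffMeasure d).setIntegral_preimage_emb
      R.toHomeomorph.measurableEmbedding (fun x => g (⟪x, y⟫ / ‖y‖))]
    have : R.toIsometryEquiv ⁻¹' Metric.sphere (0 : E) 1 = Metric.sphere 0 1 := by ext; simp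
    rw [this]
    congr 1 with x
    rw [← R.inner_map_map x e, hR, inner_smul_right, div_eq_inv_mul]
    rfl
  rw [setIntegral_congr_fun Metric.isClosed_sphere.measurableSet h1, setIntegral_const] at hswap
  have h3 : ∀ᵐ y ∂((volume : Measure E).restrict (Metric.ball (0 : E) 1)),
      ∫ x in Metric.sphere (0 : E) 1, g (⟪x, y⟫ / ‖y‖) ∂μH[(d : ℝ)] =
      ∫ x in Metric.sphere (0 : E) 1, g ⟪x, e⟫ ∂μH[(d : ℝ)] := by
    refine ae_restrict_of_ae ?_
    filter_upwards [Measure.ae_ne volume (0 : E)] with y hy using h2 y hy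
  rw [integral_congr_ae h3, setIntegral_const] at hswap
  simpa [smul_eq_mul] using hswap.symm

end Sphere

/-! ### One-variable integrals -/

/-- The Wallis product for odd powers of the sine, in terms of the binomial `C(m + 1/2, m)`. -/
lemma genBinom_mul_integral_sin_pow (m : ℕ) :
    genBinom ((m : ℝ) + 1 / 2) m * ∫ θ in (0 : ℝ)..π, Real.sin θ ^ (2 * m + 1) = 2 := by
  rw [integral_sin_pow_odd]
  unfold genBinom fall
  induction m with
  | zero => simp
  | succ k ih =>
    rw [Finset.prod_range_succ', Finset.prod_range_succ, Nat.factorial_succ]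
    have h : ∀ j ∈ Finset.range k, ((k + 1 : ℕ) : ℝ) + 1 / 2 - ((j + 1 : ℕ) : ℝ) =
        (k : ℝ) + 1 / 2 - j := by
      intro j _
      push_cast
      ring
    rw [Finset.prod_congr rfl h]
    have h0 : (Nat.factorial k : ℝ) ≠ 0 := by positivity
    have h1 : (k : ℝ) + 1 ≠ 0 := by positivity
    have h2 : 2 * (k : ℝ) + 3 ≠ 0 := by positivity
    refine Eq.trans ?_ ih
    generalize ∏ j ∈ Finset.range k, ((k : ℝ) + 1 / 2 - j) = P
    generalize ∏ i ∈ Finset.range k, (2 * (i : ℝ) + 2) / (2 * i + 3) = Q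
    push_cast
    field_simp
    ring

/-- The substitution `s = 1 + 3 cos² θ`, applied on `(0, π/2)`. -/
lemma integral_sin_pow_mul_cos (m : ℕ) {F : ℝ → ℝ} (hF : Continuous F) :
    3 * ∫ θ in (0 : ℝ)..π, Real.sin θ ^ (2 * m + 1) * F (1 + 3 * Real.cos θ ^ 2) =
      ∫ s in (1 : ℝ)..4, (Real.sqrt ((s - 1) / 3))⁻¹ * ((4 - s) / 3) ^ m * F s := by
  set h : ℝ → ℝ := fun θ => Real.sin θ ^ (2 * m + 1) * F (1 + 3 * Real.cos θ ^ 2) with hh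
  have hc : Continuous h := by fun_prop
  have hsplit : ∫ θ in (0 : ℝ)..π, h θ = 2 * ∫ θ in (0 : ℝ)..(π / 2), h θ := by
    rw [← intervalIntegral.integral_add_adjacent_intervals (hc.intervalIntegrable 0 (π / 2))
      (hc.intervalIntegrable (π / 2) π)]
    have : ∫ θ in (π / 2)..π, h θ = ∫ θ in (0 : ℝ)..(π / 2), h θ := by
      have h1 : ∀ θ, h θ = h (π - θ) := by
        intro θ
        simp [hh, Real.sin_pi_sub, Real.cos_pi_sub]
      rw [intervalIntegral.integral_congr (g := fun θ => h (π - θ)) (fun θ _ => h1 θ),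
        intervalIntegral.integral_comp_sub_left]
      congr 1 <;> ring
    rw [this]
    ring
  have hpos : ∀ θ ∈ Set.Ioo 0 (π / 2), 0 < Real.sin θ ∧ 0 < Real.cos θ := fun θ hθ =>
    ⟨Real.sin_pos_of_pos_of_lt_pi hθ.1 (by linarith [hθ.2, Real.pi_pos]),
      Real.cos_pos_of_mem_Ioo ⟨by linarith [hθ.1, Real.pi_pos], hθ.2⟩⟩
  have himg : (fun θ : ℝ => 1 + 3 * Real.cos θ ^ 2) '' Set.Ioo 0 (π / 2) = Set.Ioo 1 4 := by
    ext s
    constructor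
    · rintro ⟨θ, hθ, rfl⟩
      obtain ⟨hs, hcos⟩ := hpos θ hθ
      have := Real.sin_sq_add_cos_sq θ
      constructor <;> simp only <;> nlinarith
    · rintro ⟨h1, h4⟩
      have hs0 : 0 < √((s - 1) / 3) := Real.sqrt_pos.2 (by linarith)
      have hs1 : √((s - 1) / 3) < 1 := by
        rw [Real.sqrt_lt' one_pos]
        linarith
      refine ⟨Real.arccos √((s - 1) / 3), ⟨Real.arccos_pos.2 hs1,
        Real.arccos_lt_pi_div_two.2 hs0⟩, ?_⟩
      simp only
      rw [Real.cos_arccos (by linarith) hs1.le, Real.sq_sqrt (by linarith)]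
      ring
  have hinj : Set.InjOn (fun θ : ℝ => 1 + 3 * Real.cos θ ^ 2) (Set.Ioo 0 (π / 2)) := by
    intro a ha b hb hab
    simp only at hab
    refine Real.injOn_cos ⟨ha.1.le, by linarith [ha.2, Real.pi_pos]⟩
      ⟨hb.1.le, by linarith [hb.2, Real.pi_pos]⟩ ?_
    exact (sq_eq_sq₀ (hpos a ha).2.le (hpos b hb).2.le).1 (by linarith)
  have hderiv : ∀ θ ∈ Set.Ioo 0 (π / 2), HasDerivWithinAt (fun θ : ℝ => 1 + 3 * Real.cos θ ^ 2)
      (-(6 * Real.cos θ * Real.sin θ)) (Set.Ioo 0 (π / 2)) θ := by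
    intro θ _
    have := (((Real.hasDerivAt_cos θ).pow 2).const_mul 3).const_add 1
    refine (this.congr_deriv ?_).hasDerivWithinAt
    simp
    ring
  have hsub := integral_image_eq_integral_abs_deriv_smul measurableSet_Ioo hderiv hinj
    (fun s => (Real.sqrt ((s - 1) / 3))⁻¹ * ((4 - s) / 3) ^ m * F s)
  rw [himg] at hsub
  rw [hsplit, intervalIntegral.integral_of_le (by norm_num : (1 : ℝ) ≤ 4),
    intervalIntegral.integral_of_le (by positivity : (0 : ℝ) ≤ π / 2),
    integral_Ioc_eq_integral_Ioo, integral_Ioc_eq_integral_Ioo, hsub, ← mul_assoc,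
    ← integral_const_mul]
  refine setIntegral_congr_fun measurableSet_Ioo fun θ hθ => ?_
  obtain ⟨hs, hcos⟩ := hpos θ hθ
  have e1 : (1 + 3 * Real.cos θ ^ 2 - 1) / 3 = Real.cos θ ^ 2 := by ring
  have e2 : (4 - (1 + 3 * Real.cos θ ^ 2)) / 3 = Real.sin θ ^ 2 := by
    rw [Real.sin_sq]
    ring
  simp only [hh, smul_eq_mul]
  rw [e1, e2, Real.sqrt_sq hcos.le, abs_neg, abs_of_pos (by positivity), ← pow_mul]
  field_simp
  ring

/-! ### Zonal averages in polar coordinates -/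

/-- In the coordinates `(u, z)` on `ℝ × W` with `dim W = k + 1`, polar coordinates in `W` and then in
the half plane `(u, ‖z‖)` turn the average of a `0`-homogeneous zonal function over the ball into an
integral against `sin ^ k`, up to a constant independent of the function. -/
lemma ball_integral_zonal {W : Type*} [NormedAddCommGroup W] [InnerProductSpace ℝ W]
    [FiniteDimensional ℝ W] [MeasurableSpace W] [BorelSpace W] {k : ℕ}
    (hk : Module.finrank ℝ W = k + 1) :
    ∃ c : ℝ, ∀ (g : ℝ → ℝ) (C : ℝ), Continuous g → (∀ u, ‖g u‖ ≤ C) →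
      ∫ y in Metric.ball (0 : WithLp 2 (ℝ × W)) 1, g (⟪y, WithLp.toLp 2 (1, 0)⟫ / ‖y‖) =
        c * ∫ θ in (0 : ℝ)..π, Real.sin θ ^ k * g (Real.cos θ) := by
  have : Nontrivial W := Module.nontrivial_of_finrank_pos (R := ℝ) (by omega)
  refine ⟨((k + 1 : ℕ) : ℝ) * (volume.real (Metric.ball (0 : W) 1) *
    ∫ ρ in Set.Ioi (0 : ℝ), if ρ < 1 then ρ ^ (k + 1) else 0), fun g C hg hC => ?_⟩
  have hC0 : 0 ≤ C := (norm_nonneg _).trans (hC 0)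
  set G : ℝ → ℝ → ℝ := fun u r => if u ^ 2 + r ^ 2 < 1 then g (u / √(u ^ 2 + r ^ 2)) else 0 with hG
  have hGb : ∀ u r, ‖G u r‖ ≤ C := by
    intro u r
    simp only [hG]
    split_ifs
    · exact hC _
    · simpa using hC0
  have hGm : Measurable (Function.uncurry G) := by
    refine Measurable.ite (measurableSet_lt (by fun_prop) (by fun_prop)) ?_ measurable_const
    exact hg.measurable.comp (by fun_prop)
  -- the integrand in the coordinates `(u, z)`
  have hnorm : ∀ y : WithLp 2 (ℝ × W), ‖y‖ = √(y.fst ^ 2 + ‖y.snd‖ ^ 2) := by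
    intro y
    rw [WithLp.prod_norm_eq_of_L2, Real.norm_eq_abs, sq_abs]
  have hind : ∀ y : WithLp 2 (ℝ × W),
      (Metric.ball (0 : WithLp 2 (ℝ × W)) 1).indicator
        (fun y => g (⟪y, WithLp.toLp 2 (1, 0)⟫ / ‖y‖)) y = G y.fst ‖y.snd‖ := by
    intro y
    have h1 : ⟪y, WithLp.toLp 2 ((1 : ℝ), (0 : W))⟫ = y.fst := by
      simp [WithLp.prod_inner_apply]
    have h2 : y ∈ Metric.ball (0 : WithLp 2 (ℝ × W)) 1 ↔ y.fst ^ 2 + ‖y.snd‖ ^ 2 < 1 := by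
      rw [mem_ball_zero_iff, hnorm, Real.sqrt_lt' one_pos, one_pow]
    by_cases hy : y ∈ Metric.ball (0 : WithLp 2 (ℝ × W)) 1
    · simp only [Set.indicator_of_mem hy, hG, if_pos (h2.1 hy), h1, hnorm y]
    · simp only [Set.indicator_of_notMem hy, hG, if_neg (h2.not.1 hy)]
  have hemb : MeasurableEmbedding (WithLp.toLp 2 : ℝ × W → WithLp 2 (ℝ × W)) :=
    (MeasurableEquiv.toLp 2 (ℝ × W)).measurableEmbedding
  have hintW : Integrable (fun y : WithLp 2 (ℝ × W) => G y.fst ‖y.snd‖) := by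
    simp_rw [← hind]
    rw [integrable_indicator_iff measurableSet_ball]
    have : IsFiniteMeasure ((volume : Measure (WithLp 2 (ℝ × W))).restrict (Metric.ball 0 1)) :=
      ⟨by simpa using measure_ball_lt_top⟩
    refine Integrable.of_bound (Measurable.aestronglyMeasurable ?_) C
      (Filter.Eventually.of_forall fun p => hC _)
    exact hg.measurable.comp (by fun_prop)
  have hintP : Integrable (fun p : ℝ × W => G p.1 ‖p.2‖) :=
    ((WithLp.volume_preserving_toLp ℝ W).integrable_comp_emb hemb).2 hintW
  -- the function on the half plane `r > 0`, extended by `0`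
  set H : ℝ → ℝ → ℝ := fun u r => if 0 < r then r ^ k * G u r else 0 with hH
  have hHm : Measurable (Function.uncurry H) := by
    refine Measurable.ite (measurableSet_lt measurable_const measurable_snd) ?_ measurable_const
    exact (measurable_snd.pow_const k).mul hGm
  have hHint : Integrable (Function.uncurry H) := by
    have hfin : IntegrableOn (fun _ : ℝ × ℝ => C) (Metric.closedBall 0 1) :=
      integrableOn_const (measure_closedBall_lt_top.ne)
    refine ((integrable_indicator_iff Metric.isClosed_closedBall.measurableSet).2 hfin).mono'
      hHm.aestronglyMeasurable (Filter.Eventually.of_forall ?_)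
    rintro ⟨u, r⟩
    simp only [Function.uncurry, hH]
    have hnn : 0 ≤ (Metric.closedBall (0 : ℝ × ℝ) 1).indicator (fun _ => C) (u, r) :=
      Set.indicator_nonneg (fun _ _ => hC0) _
    split_ifs with hr
    · by_cases hur : u ^ 2 + r ^ 2 < 1
      · have hu : |u| ≤ 1 := abs_le_one_iff_mul_self_le_one.2 (by nlinarith)
        have hr1 : r ≤ 1 := by nlinarith
        have hmem : (u, r) ∈ Metric.closedBall (0 : ℝ × ℝ) 1 := by
          rw [mem_closedBall_zero_iff, Prod.norm_def]
          exact max_le hu (by rwa [Real.norm_of_nonneg hr.le])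
        rw [Set.indicator_of_mem hmem, norm_mul, norm_pow, Real.norm_of_nonneg hr.le]
        calc r ^ k * ‖G u r‖ ≤ 1 * C :=
              mul_le_mul (pow_le_one₀ hr.le hr1) (hGb u r) (norm_nonneg _) zero_le_one
          _ = C := one_mul C
      · simpa [hG, hur] using hnn
    · simpa using hnn
  have hinner : ∀ u, ∫ z : W, G u ‖z‖ = ((k + 1 : ℕ) : ℝ) *
      (volume.real (Metric.ball (0 : W) 1) * ∫ r, H u r) := by
    intro u
    rw [integral_fun_norm_addHaar volume (G u), hk, nsmul_eq_mul, smul_eq_mul,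
      ← integral_indicator measurableSet_Ioi]
    congr 3
  rw [← integral_indicator measurableSet_ball]
  simp_rw [hind]
  rw [← (WithLp.volume_preserving_toLp ℝ W).integral_comp hemb]
  change ∫ p : ℝ × W, G p.1 ‖p.2‖ = _
  rw [Measure.volume_eq_prod, integral_prod _ hintP]
  simp_rw [hinner, integral_const_mul]
  rw [mul_assoc, mul_assoc]
  congr 2
  rw [show ∫ u, ∫ r, H u r = ∫ u, ∫ r, Function.uncurry H (u, r) from rfl,
    ← integral_prod _ hHint, ← Measure.volume_eq_prod, ← integral_comp_polarCoord_symm]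
  have htgt : polarCoord.target = Set.Ioi (0 : ℝ) ×ˢ Set.Ioo (-π) π := rfl
  have hpol : ∀ p ∈ polarCoord.target, p.1 • Function.uncurry H (polarCoord.symm p) =
      (if p.1 < 1 then p.1 ^ (k + 1) else 0) *
        (Set.Ioo 0 π).indicator (fun θ => Real.sin θ ^ k * g (Real.cos θ)) p.2 := by
    rintro ⟨ρ, θ⟩ ⟨hρ, hθ⟩
    simp only [Set.mem_Ioi] at hρ
    have hsymm : polarCoord.symm (ρ, θ) = (ρ * Real.cos θ, ρ * Real.sin θ) := rfl
    have hsq : (ρ * Real.cos θ) ^ 2 + (ρ * Real.sin θ) ^ 2 = ρ ^ 2 := by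
      linear_combination ρ ^ 2 * Real.sin_sq_add_cos_sq θ
    have hlt : ρ ^ 2 < 1 ↔ ρ < 1 := by
      rw [sq_lt_one_iff₀ hρ.le]
    have hpos : 0 < ρ * Real.sin θ ↔ θ ∈ Set.Ioo 0 π := by
      rw [mul_pos_iff_of_pos_left hρ]
      refine ⟨fun h => ⟨?_, hθ.2⟩, fun h => Real.sin_pos_of_pos_of_lt_pi h.1 h.2⟩
      by_contra! h0
      exact absurd (Real.sin_nonpos_of_nonpos_of_neg_pi_le h0 hθ.1.le) (not_le.2 h)
    simp only [hsymm, Function.uncurry, hH, hG, hsq, hlt, hpos, Set.indicator_apply, smul_eq_mul,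
      Real.sqrt_sq hρ.le, mul_div_cancel_left₀ _ hρ.ne']
    split_ifs
    · rw [mul_pow]
      ring
    all_goals simp
  rw [setIntegral_congr_fun polarCoord.open_target.measurableSet hpol, htgt,
    Measure.volume_eq_prod, setIntegral_prod_mul (fun ρ : ℝ => if ρ < 1 then ρ ^ (k + 1) else 0)]
  congr 1
  rw [setIntegral_indicator measurableSet_Ioo,
    Set.inter_eq_self_of_subset_right (Set.Ioo_subset_Ioo_left (by linarith [Real.pi_pos])),
    intervalIntegral.integral_of_le Real.pi_pos.le, integral_Ioc_eq_integral_Ioo]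

/-- The average over the unit sphere of `ℝ × ℝ^(k+1)` of a function of the first coordinate. -/
lemma sphere_average_fst {k : ℕ} {g : ℝ → ℝ} {C : ℝ} (hg : Continuous g) (hC : ∀ u, ‖g u‖ ≤ C) :
    (∫ x in Metric.sphere (0 : WithLp 2 (ℝ × EuclideanSpace ℝ (Fin (k + 1)))) 1,
        g ⟪x, WithLp.toLp 2 (1, 0)⟫ ∂μH[((k + 1 : ℕ) : ℝ)]) *
      ∫ θ in (0 : ℝ)..π, Real.sin θ ^ k =
    (μH[((k + 1 : ℕ) : ℝ)]).real
        (Metric.sphere (0 : WithLp 2 (ℝ × EuclideanSpace ℝ (Fin (k + 1)))) 1) *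
      ∫ θ in (0 : ℝ)..π, Real.sin θ ^ k * g (Real.cos θ) := by
  have hd : Module.finrank ℝ (WithLp 2 (ℝ × EuclideanSpace ℝ (Fin (k + 1)))) = (k + 1) + 1 := by
    rw [(WithLp.linearEquiv 2 ℝ (ℝ × EuclideanSpace ℝ (Fin (k + 1)))).finrank_eq]
    simp
    ring
  have he : ‖(WithLp.toLp 2 (1, 0) : WithLp 2 (ℝ × EuclideanSpace ℝ (Fin (k + 1))))‖ = 1 := by
    simp
  obtain ⟨c, hc⟩ := ball_integral_zonal (W := EuclideanSpace ℝ (Fin (k + 1))) (k := k) (by simp)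
  have hz := zonal_average hd hg hC he
  have hz1 := zonal_average hd (g := fun _ => 1) continuous_const (C := 1) (by simp) he
  rw [hc g C hg hC] at hz
  rw [hc (fun _ => 1) 1 continuous_const (by simp)] at hz1
  have hσ : 0 < (μH[((k + 1 : ℕ) : ℝ)]).real
      (Metric.sphere (0 : WithLp 2 (ℝ × EuclideanSpace ℝ (Fin (k + 1)))) 1) :=
    ENNReal.toReal_pos (hausdorffMeasure_sphere_pos_s17 hd).ne' (hausdorffMeasure_sphere_lt_top_s17 hd).ne
  have hB : 0 < volume.real (Metric.ball (0 : WithLp 2 (ℝ × EuclideanSpace ℝ (Fin (k + 1)))) 1) :=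
    ENNReal.toReal_pos (Metric.measure_ball_pos _ _ one_pos).ne' measure_ball_lt_top.ne
  rw [setIntegral_const] at hz1
  simp only [smul_eq_mul, mul_one] at hz1
  -- the case `g = 1` identifies the unknown constant `c`
  have hcK : volume.real (Metric.ball (0 : WithLp 2 (ℝ × EuclideanSpace ℝ (Fin (k + 1)))) 1) =
      c * ∫ θ in (0 : ℝ)..π, Real.sin θ ^ k := by
    apply mul_right_cancel₀ hσ.ne'
    rw [hz1, mul_comm]
  have hc0 : c ≠ 0 := by
    rintro rfl
    rw [zero_mul] at hcK
    exact hB.ne' hcK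
  rw [hcK] at hz
  apply mul_left_cancel₀ hc0
  linear_combination hz

/-- The average of a zonal function over the unit sphere of `Xᗮ`. -/
lemma orthogonal_sphere_average {V : Type*} [NormedAddCommGroup V] [InnerProductSpace ℝ V]
    [FiniteDimensional ℝ V] [MeasurableSpace V] [BorelSpace V] {k : ℕ}
    (hV : Module.finrank ℝ V = k + 3) {X e : V} (hX : ‖X‖ = 1) (he : ‖e‖ = 1) (hXe : ⟪e, X⟫ = 0)
    {g : ℝ → ℝ} {C : ℝ} (hg : Continuous g) (hC : ∀ u, ‖g u‖ ≤ C) :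
    ((μH[((k + 1 : ℕ) : ℝ)] {Y : V | ‖Y‖ = 1 ∧ ⟪X, Y⟫ = 0}).toReal)⁻¹ *
        ∫ Y in {Y : V | ‖Y‖ = 1 ∧ ⟪X, Y⟫ = 0}, g ⟪Y, e⟫ ∂(μH[((k + 1 : ℕ) : ℝ)]) =
      (∫ θ in (0 : ℝ)..π, Real.sin θ ^ k * g (Real.cos θ)) /
        ∫ θ in (0 : ℝ)..π, Real.sin θ ^ k := by
  set e₀ : WithLp 2 (ℝ × EuclideanSpace ℝ (Fin (k + 1))) := WithLp.toLp 2 (1, 0) with he₀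
  have hd : Module.finrank ℝ (WithLp 2 (ℝ × EuclideanSpace ℝ (Fin (k + 1)))) = (k + 1) + 1 := by
    rw [(WithLp.linearEquiv 2 ℝ (ℝ × EuclideanSpace ℝ (Fin (k + 1)))).finrank_eq]
    simp
    ring
  have he₀n : ‖e₀‖ = 1 := by
    simp [he₀]
  have hfin : Module.finrank ℝ (ℝ ∙ X)ᗮ = k + 2 := finrank_orth hV hX
  -- a linear isometry onto the hyperplane `Xᗮ` taking `e₀` to `e`
  obtain ⟨f, hfr, hfe⟩ : ∃ f : WithLp 2 (ℝ × EuclideanSpace ℝ (Fin (k + 1))) →ₗᵢ[ℝ] V,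
      (∀ Y, ⟪X, Y⟫ = 0 ↔ Y ∈ Set.range f) ∧ f e₀ = e := by
    let L := (stdOrthonormalBasis ℝ (WithLp 2 (ℝ × EuclideanSpace ℝ (Fin (k + 1))))).equiv
      (stdOrthonormalBasis ℝ (ℝ ∙ X)ᗮ) (finCongr (hd.trans hfin.symm))
    let e' : (ℝ ∙ X)ᗮ := ⟨e, Submodule.mem_orthogonal_singleton_iff_inner_left.2 hXe⟩
    obtain ⟨R, hR⟩ := exists_isometryEquiv_apply_eq (e := L e₀) (f := e')
      (by rw [L.norm_map, he₀n]; exact he.symm)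
    refine ⟨(ℝ ∙ X)ᗮ.subtypeₗᵢ.comp (L.trans R).toLinearIsometry, fun Y => ?_, ?_⟩
    · rw [← Submodule.mem_orthogonal_singleton_iff_inner_right]
      constructor
      · intro hY
        refine ⟨(L.trans R).symm ⟨Y, hY⟩, ?_⟩
        simp
      · rintro ⟨w, rfl⟩
        exact (R (L w)).2
    · change ((R (L e₀) : (ℝ ∙ X)ᗮ) : V) = e
      rw [hR]
  have hS : {Y : V | ‖Y‖ = 1 ∧ ⟪X, Y⟫ = 0} = f '' Metric.sphere 0 1 := by
    ext Y
    simp only [Set.mem_ofPred_eq, hfr]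
    constructor
    · rintro ⟨h1, w, rfl⟩
      exact ⟨w, by simpa using h1, rfl⟩
    · rintro ⟨w, hw, rfl⟩
      exact ⟨by simpa using hw, w, rfl⟩
  have hpre : f ⁻¹' (f '' Metric.sphere 0 1) = Metric.sphere 0 1 :=
    Set.preimage_image_eq _ f.injective
  have hemb : MeasurableEmbedding f := f.isometry.isClosedEmbedding.measurableEmbedding
  have hk0 : (0 : ℝ) ≤ ((k + 1 : ℕ) : ℝ) := Nat.cast_nonneg _
  have hint : ∫ Y in f '' Metric.sphere 0 1, g ⟪Y, e⟫ ∂(μH[((k + 1 : ℕ) : ℝ)]) =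
      ∫ x in Metric.sphere 0 1, g ⟪x, e₀⟫ ∂(μH[((k + 1 : ℕ) : ℝ)]) := by
    have hmap := f.isometry.map_hausdorffMeasure (d := ((k + 1 : ℕ) : ℝ)) (Or.inl hk0)
    have hres : (μH[((k + 1 : ℕ) : ℝ)] : Measure V).restrict (f '' Metric.sphere 0 1) =
        (Measure.map f μH[((k + 1 : ℕ) : ℝ)]).restrict (f '' Metric.sphere 0 1) := by
      rw [hmap, Measure.restrict_restrict_of_subset (Set.image_subset_range _ _)]
    rw [hres, hemb.setIntegral_map, hpre, ← hfe]
    simp_rw [f.inner_map_map]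
  rw [hS, hint, f.isometry.hausdorffMeasure_image (Or.inl hk0)]
  have hσ : 0 < (μH[((k + 1 : ℕ) : ℝ)]
      (Metric.sphere (0 : WithLp 2 (ℝ × EuclideanSpace ℝ (Fin (k + 1)))) 1)).toReal :=
    ENNReal.toReal_pos (hausdorffMeasure_sphere_pos_s17 hd).ne' (hausdorffMeasure_sphere_lt_top_s17 hd).ne
  rw [eq_div_iff (integral_sin_pow_pos k).ne', mul_assoc, sphere_average_fst hg hC, measureReal_def,
    inv_mul_cancel_left₀ hσ.ne']

/-! ### The distribution of the sectional curvature -/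

/-- The distribution of the sectional curvature `1 + 3⟨Y,iX⟫²` of the normalized
Fubini–Study metric on `ℂP^n`: the Stiefel average of `F(sec)` is given by integrating
`F` against the explicit density `(1/6) C(n−3/2,n−2) ((s−1)/3)^{-1/2}((4−s)/3)^{n−2}`
on `[1,4]`. -/
theorem complex_projective_space_distribution (n : ℕ) (hn : 2 ≤ n)
    (F : ℝ → ℝ) (hF : Continuous F) :
    stiefelAvg (2 * n)
        (fun X Y : EuclideanSpace ℂ (Fin n) =>
          F (1 + 3 * ⟪Y, Complex.I • X⟫ ^ 2)) =
      (1 / 6) * genBinom ((n : ℝ) - 3 / 2) (n - 2) *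
        ∫ s in (1 : ℝ)..4,
          (Real.sqrt ((s - 1) / 3))⁻¹ * ((4 - s) / 3) ^ (n - 2) * F s := by
  obtain ⟨m, rfl⟩ : ∃ m, n = m + 2 := ⟨n - 2, by omega⟩
  have hV : Module.finrank ℝ (EuclideanSpace ℂ (Fin (m + 2))) = (2 * m + 1) + 3 := by
    have h := finrank_real_of_complex (EuclideanSpace ℂ (Fin (m + 2)))
    rw [finrank_euclideanSpace_fin] at h
    exact h.trans (by ring)
  have : FiniteDimensional ℝ (EuclideanSpace ℂ (Fin (m + 2))) :=
    FiniteDimensional.complexToReal _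
  -- truncating the square at `1` makes the zonal function bounded without changing the integrals
  set g : ℝ → ℝ := fun u => F (1 + 3 * min (u ^ 2) 1) with hg
  have hgc : Continuous g := by fun_prop
  obtain ⟨C, hC⟩ := (isCompact_Icc (a := (1 : ℝ)) (b := 4)).exists_bound_of_continuousOn
    hF.continuousOn
  have hgC : ∀ u, ‖g u‖ ≤ C := by
    intro u
    have h0 : 0 ≤ min (u ^ 2) 1 := le_min (sq_nonneg u) zero_le_one
    have h1 : min (u ^ 2) 1 ≤ 1 := min_le_right _ _
    exact hC _ ⟨by linarith, by linarith⟩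
  have hgF : ∀ u, |u| ≤ 1 → g u = F (1 + 3 * u ^ 2) := by
    intro u hu
    simp only [hg]
    rw [min_eq_left ((sq_le_one_iff_abs_le_one u).2 hu)]
  have hA : ∫ θ in (0 : ℝ)..π, Real.sin θ ^ (2 * m + 1) * g (Real.cos θ) =
      ∫ θ in (0 : ℝ)..π, Real.sin θ ^ (2 * m + 1) * F (1 + 3 * Real.cos θ ^ 2) :=
    intervalIntegral.integral_congr fun θ _ => by simp only [hgF _ (Real.abs_cos_le_one θ)]
  have hinner : ∀ X ∈ Metric.sphere (0 : EuclideanSpace ℂ (Fin (m + 2))) 1,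
      (((μH[(2 * m + 1 + 1 : ℕ)] {Y : EuclideanSpace ℂ (Fin (m + 2)) |
          ‖Y‖ = 1 ∧ ⟪X, Y⟫ = 0}).toReal)⁻¹ *
        ∫ Y in {Y : EuclideanSpace ℂ (Fin (m + 2)) | ‖Y‖ = 1 ∧ ⟪X, Y⟫ = 0},
          F (1 + 3 * ⟪Y, Complex.I • X⟫ ^ 2) ∂(μH[(2 * m + 1 + 1 : ℕ)])) =
      (∫ θ in (0 : ℝ)..π, Real.sin θ ^ (2 * m + 1) * F (1 + 3 * Real.cos θ ^ 2)) /
        ∫ θ in (0 : ℝ)..π, Real.sin θ ^ (2 * m + 1) := by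
    intro X hX
    rw [mem_sphere_zero_iff_norm] at hX
    have hI : ‖Complex.I • X‖ = 1 := by
      rw [norm_smul, Complex.norm_I, one_mul, hX]
    have hIX : ⟪Complex.I • X, X⟫ = 0 := by
      change RCLike.re (inner ℂ (Complex.I • X) X) = 0
      rw [inner_smul_left, inner_self_eq_norm_sq_to_K, hX]
      simp
    rw [← hA, ← orthogonal_sphere_average hV hX hI hIX hgc hgC]
    congr 1
    have hclosed : IsClosed {Y : EuclideanSpace ℂ (Fin (m + 2)) | ‖Y‖ = 1 ∧ ⟪X, Y⟫ = 0} :=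
      (isClosed_eq continuous_norm continuous_const).inter
        (isClosed_eq (continuous_const.inner continuous_id) continuous_const)
    refine setIntegral_congr_fun hclosed.measurableSet fun Y hY => (hgF _ ?_).symm
    refine (abs_real_inner_le_norm _ _).trans ?_
    rw [hI, hY.1, one_mul]
  have hd1 : ((2 * (m + 2) : ℕ) : ℝ) - 1 = ((2 * m + 3 : ℕ) : ℝ) := by
    push_cast
    ring
  have hd2 : ((2 * (m + 2) : ℕ) : ℝ) - 2 = ((2 * m + 1 + 1 : ℕ) : ℝ) := by
    push_cast
    ring
  have hσ : 0 < (μH[((2 * m + 3 : ℕ) : ℝ)]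
      (Metric.sphere (0 : EuclideanSpace ℂ (Fin (m + 2))) 1)).toReal :=
    ENNReal.toReal_pos (hausdorffMeasure_sphere_pos_s17 hV).ne' (hausdorffMeasure_sphere_lt_top_s17 hV).ne
  have hx : ((m + 2 : ℕ) : ℝ) - 3 / 2 = (m : ℝ) + 1 / 2 := by
    push_cast
    ring
  have hK := genBinom_mul_integral_sin_pow m
  have hKpos : 0 < ∫ θ in (0 : ℝ)..π, Real.sin θ ^ (2 * m + 1) := integral_sin_pow_pos _
  rw [stiefelAvg, hd1, hd2, setIntegral_congr_fun Metric.isClosed_sphere.measurableSet hinner,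
    setIntegral_const, measureReal_def, smul_eq_mul, inv_mul_cancel_left₀ hσ.ne', hx,
    Nat.add_sub_cancel, ← integral_sin_pow_mul_cos m hF, div_eq_iff hKpos.ne']
  linear_combination (-1 / 2) *
    (∫ θ in (0 : ℝ)..π, Real.sin θ ^ (2 * m + 1) * F (1 + 3 * Real.cos θ ^ 2)) * hK
end

section
/- On the space of algebraic curvature tensors over ℝ⁴, the three real-valued functions R ↦ Ψ_1(R)², R ↦ Ψ_2(R) and R ↦ |Ric°(R)|² are linearly independent: if α, β, γ ∈ ℝ satisfy α·Ψ_1(R)² + β·Ψ_2(R) + γ·|Ric°(R)|² = 0 for every algebraic curvature tensor R on ℝ⁴, then α = β = γ = 0. -/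
/-!
The three invariants are separated by three curvature tensors whose curvature operators are
diagonal in the basis `e_i ∧ e_j` (`diagCurv`), so that the Bianchi identity is automatic, the
Ricci form is diagonal, and `⟨R(Y,X)X, Y⟩` is an explicit biquadratic form.

* A nonzero Weyl tensor has `Ric° = 0`. It is negated by exchanging two coordinates, an isometry,
  so `Ψ_1 = 0` (`Psi_one_eq_zero`), while `Ψ_2 > 0`; hence `β = 0`.
* Constant curvature has `Ric° = 0`, and `Ψ_1 > 0` by Lagrange's identity; hence `α = 0`.
* A tensor with a single curved coordinate plane has `Ric° ≠ 0`; hence `γ = 0`.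

Positivity of the moments (`Psi_pos`) holds because the integrand is continuous, integrable,
nonnegative and not identically zero; integrability comes from a quartic bound on the biquadratic
form absorbed by the Gaussian weight.
-/

open MeasureTheory RealInnerProductSpace
open scoped Real

/-- The `k`-th Gaussian sectional-curvature moment of an algebraic curvature tensor on
`ℝ^d`: `Ψ_k(R) = (1/[d+2k−2]_{2k}) (2π)^{-d} ∫∫ e^{-(‖X‖²+‖Y‖²)/2} ⟨R(Y,X)X,Y⟩^k`. -/
noncomputable def Psi (d : ℕ) (k : ℕ) (Rc : AlgCurvTensor (EuclideanSpace ℝ (Fin d))) : ℝ :=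
  (fall ((d : ℝ) + 2 * k - 2) (2 * k))⁻¹ *
    ((2 * Real.pi) ^ (-(d : ℝ)) *
      ∫ X : EuclideanSpace ℝ (Fin d), ∫ Y : EuclideanSpace ℝ (Fin d),
        Real.exp (-(‖X‖ ^ 2 + ‖Y‖ ^ 2) / 2) * ⟪Rc.R Y X X, Y⟫ ^ k)

/-- The Ricci form `Ric(R)(X,Y) = ∑_μ ⟨R(e_μ,X)Y, e_μ⟩` of an algebraic curvature tensor
on `ℝ^4`, in the standard orthonormal basis. -/
noncomputable def ricci (Rc : AlgCurvTensor (EuclideanSpace ℝ (Fin 4)))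
    (X Y : EuclideanSpace ℝ (Fin 4)) : ℝ :=
  ∑ μ : Fin 4, ⟪Rc.R (EuclideanSpace.single μ 1) X Y, EuclideanSpace.single μ 1⟫

/-- The scalar curvature `κ(R) = ∑_μ Ric(R)(e_μ,e_μ)`. -/
noncomputable def scalarCurv (Rc : AlgCurvTensor (EuclideanSpace ℝ (Fin 4))) : ℝ :=
  ∑ μ : Fin 4, ricci Rc (EuclideanSpace.single μ 1) (EuclideanSpace.single μ 1)

/-- The square norm `|Ric°(R)|² = (1/2) ∑_{μ,ν} (Ric(R) − (κ(R)/4)⟨·,·⟩)(e_μ,e_ν)²` of the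
trace-free Ricci form. -/
noncomputable def ricciTracelessNormSq (Rc : AlgCurvTensor (EuclideanSpace ℝ (Fin 4))) : ℝ :=
  (1 / 2) * ∑ μ : Fin 4, ∑ ν : Fin 4,
    (ricci Rc (EuclideanSpace.single μ 1) (EuclideanSpace.single ν 1) -
        scalarCurv Rc / 4 *
          ⟪(EuclideanSpace.single μ 1 : EuclideanSpace ℝ (Fin 4)),
            EuclideanSpace.single ν 1⟫) ^ 2

/-! ### Diagonal curvature tensors -/

/-- Four-dimensional Euclidean space. -/
abbrev E4 : Type := EuclideanSpace ℝ (Fin 4)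

/-- The algebraic curvature tensor whose curvature operator is diagonal in the basis
`e_i ∧ e_j`: `(R(X,Y)Z)_i = ∑_j c_ij (X_i Y_j − X_j Y_i) Z_j`. For `i ≠ j`, the sectional
curvature of the plane spanned by `e_i, e_j` is `c_ij`. -/
noncomputable def diagCurv (c : Fin 4 → Fin 4 → ℝ) (hc : ∀ i j, c i j = c j i) :
    AlgCurvTensor E4 where
  R := LinearMap.mk₂ ℝ
    (fun X Y =>
      { toFun := fun Z => WithLp.toLp 2 fun i => ∑ j, c i j * (X i * Y j - X j * Y i) * Z j
        map_add' := fun Z W => by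
          ext i
          simp only [PiLp.add_apply, ← Finset.sum_add_distrib]
          exact Finset.sum_congr rfl fun j _ => by ring
        map_smul' := fun a Z => by
          ext i
          simp only [PiLp.smul_apply, smul_eq_mul, RingHom.id_apply, Finset.mul_sum]
          exact Finset.sum_congr rfl fun j _ => by ring })
    (fun X X' Y => by
      ext Z i
      simp only [LinearMap.coe_mk, AddHom.coe_mk, LinearMap.add_apply, PiLp.add_apply,
        ← Finset.sum_add_distrib]
      exact Finset.sum_congr rfl fun j _ => by ring)
    (fun a X Y => by
      ext Z i
      simp only [LinearMap.coe_mk, AddHom.coe_mk, LinearMap.smul_apply, PiLp.smul_apply,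
        smul_eq_mul, Finset.mul_sum]
      exact Finset.sum_congr rfl fun j _ => by ring)
    (fun X Y Y' => by
      ext Z i
      simp only [LinearMap.coe_mk, AddHom.coe_mk, LinearMap.add_apply, PiLp.add_apply,
        ← Finset.sum_add_distrib]
      exact Finset.sum_congr rfl fun j _ => by ring)
    (fun a X Y => by
      ext Z i
      simp only [LinearMap.coe_mk, AddHom.coe_mk, LinearMap.smul_apply, PiLp.smul_apply,
        smul_eq_mul, Finset.mul_sum]
      exact Finset.sum_congr rfl fun j _ => by ring)
  antisymm X Y Z := by
    ext i
    simp only [LinearMap.mk₂_apply, LinearMap.coe_mk, AddHom.coe_mk, PiLp.neg_apply,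
      ← Finset.sum_neg_distrib]
    exact Finset.sum_congr rfl fun j _ => by ring
  skew X Y Z W := by
    simp only [LinearMap.mk₂_apply, LinearMap.coe_mk, AddHom.coe_mk, PiLp.inner_apply,
      RCLike.inner_apply, conj_trivial, Finset.mul_sum]
    rw [Finset.sum_comm, ← Finset.sum_neg_distrib]
    refine Finset.sum_congr rfl fun j _ => ?_
    rw [← Finset.sum_neg_distrib]
    refine Finset.sum_congr rfl fun i _ => ?_
    rw [hc i j]
    ring
  bianchi X Y Z := by
    ext i
    simp only [LinearMap.mk₂_apply, LinearMap.coe_mk, AddHom.coe_mk, PiLp.add_apply,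
      ← Finset.sum_add_distrib, PiLp.zero_apply]
    exact Finset.sum_eq_zero fun j _ => by ring

lemma diagCurv_apply (c : Fin 4 → Fin 4 → ℝ) (hc : ∀ i j, c i j = c j i) (X Y Z : E4)
    (i : Fin 4) :
    (diagCurv c hc).R X Y Z i = ∑ j, c i j * (X i * Y j - X j * Y i) * Z j := rfl

/-- The biquadratic form `∑_{i,j} c_ij (Y_i X_j − Y_j X_i) X_j Y_i`, which equals
`⟨R(Y,X)X, Y⟩` for `R = diagCurv c`. -/
def sect (c : Fin 4 → Fin 4 → ℝ) (X Y : E4) : ℝ :=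
  ∑ i, ∑ j, c i j * (Y i * X j - Y j * X i) * X j * Y i

lemma inner_diagCurv (c : Fin 4 → Fin 4 → ℝ) (hc : ∀ i j, c i j = c j i) (X Y : E4) :
    ⟪(diagCurv c hc).R Y X X, Y⟫ = sect c X Y := by
  simp only [PiLp.inner_apply, diagCurv_apply, RCLike.inner_apply, conj_trivial, sect]
  refine Finset.sum_congr rfl fun i _ => ?_
  rw [mul_comm, Finset.sum_mul]

lemma sect_comp (c : Fin 4 → Fin 4 → ℝ) (σ : Equiv.Perm (Fin 4)) (X Y : E4) :
    sect c (LinearIsometryEquiv.piLpCongrLeft 2 ℝ ℝ σ X)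
      (LinearIsometryEquiv.piLpCongrLeft 2 ℝ ℝ σ Y) = sect (fun i j => c (σ i) (σ j)) X Y := by
  unfold sect
  rw [← Equiv.sum_comp σ]
  refine Finset.sum_congr rfl fun i _ => ?_
  rw [← Equiv.sum_comp σ]
  refine Finset.sum_congr rfl fun j _ => ?_
  simp [LinearIsometryEquiv.piLpCongrLeft_apply, Equiv.piCongrLeft'_apply]

/-! ### Gaussian integrability and the moments -/

lemma abs_coord_le (X : E4) (i : Fin 4) : |X i| ≤ ‖X‖ := by
  simpa using PiLp.norm_apply_le X i

lemma abs_sect_le (c : Fin 4 → Fin 4 → ℝ) (X Y : E4) :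
    |sect c X Y| ≤ (∑ i, ∑ j, 2 * |c i j|) * (‖X‖ ^ 2 * ‖Y‖ ^ 2) := by
  simp only [sect, Finset.sum_mul]
  refine (Finset.abs_sum_le_sum_abs _ _).trans (Finset.sum_le_sum fun i _ => ?_)
  refine (Finset.abs_sum_le_sum_abs _ _).trans (Finset.sum_le_sum fun j _ => ?_)
  have hω : |Y i * X j - Y j * X i| ≤ 2 * (‖X‖ * ‖Y‖) := by
    refine (abs_sub _ _).trans ?_
    rw [abs_mul, abs_mul]
    have h1 := mul_le_mul (abs_coord_le Y i) (abs_coord_le X j) (abs_nonneg _) (norm_nonneg _)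
    have h2 := mul_le_mul (abs_coord_le Y j) (abs_coord_le X i) (abs_nonneg _) (norm_nonneg _)
    linarith
  calc |c i j * (Y i * X j - Y j * X i) * X j * Y i|
      = |c i j| * |Y i * X j - Y j * X i| * |X j| * |Y i| := by simp only [abs_mul]
    _ ≤ |c i j| * (2 * (‖X‖ * ‖Y‖)) * ‖X‖ * ‖Y‖ := by
        gcongr
        · exact abs_coord_le X j
        · exact abs_coord_le Y i
    _ = 2 * |c i j| * (‖X‖ ^ 2 * ‖Y‖ ^ 2) := by ring

lemma integrable_gauss : Integrable (fun X : E4 => Real.exp (-(1 / 4) * ‖X‖ ^ 2)) := by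
  have h := (GaussianFourier.integrable_cexp_neg_mul_sq_norm_add
    (V := E4) (b := (1 / 4 : ℂ)) (by norm_num) 0 0).norm
  refine h.congr (Filter.Eventually.of_forall fun X => ?_)
  simp only [Complex.norm_exp]
  congr 1
  simp [← Complex.ofReal_pow]

/-- The Gaussian weight leaves `e^{-s/4}` after absorbing `s^k`, `k ≤ 2`, where `s = ‖X‖²`. -/
lemma pow_mul_exp_le (k : ℕ) (hk : k ≤ 2) (s : ℝ) (hs : 0 ≤ s) :
    s ^ k * Real.exp (-s / 2) ≤ 8 ^ k * Real.exp (-(1 / 4) * s) := by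
  have h1 : s ≤ 8 * Real.exp (s / 8) := by
    have := Real.add_one_le_exp (s / 8)
    linarith
  have hk' : (k : ℝ) ≤ 2 := by exact_mod_cast hk
  calc s ^ k * Real.exp (-s / 2) ≤ (8 * Real.exp (s / 8)) ^ k * Real.exp (-s / 2) := by gcongr
    _ = 8 ^ k * Real.exp (k * (s / 8) + -s / 2) := by
        rw [mul_pow, ← Real.exp_nat_mul, mul_assoc, ← Real.exp_add]
    _ ≤ 8 ^ k * Real.exp (-(1 / 4) * s) := by
        gcongr
        nlinarith

lemma continuous_integrand (c : Fin 4 → Fin 4 → ℝ) (k : ℕ) : Continuous (fun p : E4 × E4 =>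
    Real.exp (-(‖p.1‖ ^ 2 + ‖p.2‖ ^ 2) / 2) * sect c p.1 p.2 ^ k) := by
  unfold sect
  fun_prop

lemma integrable_integrand (c : Fin 4 → Fin 4 → ℝ) (k : ℕ) (hk : k ≤ 2) :
    Integrable (fun p : E4 × E4 =>
      Real.exp (-(‖p.1‖ ^ 2 + ‖p.2‖ ^ 2) / 2) * sect c p.1 p.2 ^ k) := by
  set C := ∑ i, ∑ j, 2 * |c i j| with hC
  have hC0 : 0 ≤ C := by positivity
  have hg : Integrable (fun p : E4 × E4 => (C * 64) ^ k *
      (Real.exp (-(1 / 4) * ‖p.1‖ ^ 2) * Real.exp (-(1 / 4) * ‖p.2‖ ^ 2))) :=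
    (integrable_gauss.mul_prod integrable_gauss).const_mul _
  refine hg.mono' (continuous_integrand c k).aestronglyMeasurable
    (Filter.Eventually.of_forall fun p => ?_)
  rw [Real.norm_eq_abs, abs_mul, Real.abs_exp, abs_pow]
  calc Real.exp (-(‖p.1‖ ^ 2 + ‖p.2‖ ^ 2) / 2) * |sect c p.1 p.2| ^ k
      ≤ Real.exp (-(‖p.1‖ ^ 2 + ‖p.2‖ ^ 2) / 2) * (C * (‖p.1‖ ^ 2 * ‖p.2‖ ^ 2)) ^ k := by
        gcongr
        exact abs_sect_le c _ _
    _ = C ^ k * (((‖p.1‖ ^ 2) ^ k * Real.exp (-‖p.1‖ ^ 2 / 2)) *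
          ((‖p.2‖ ^ 2) ^ k * Real.exp (-‖p.2‖ ^ 2 / 2))) := by
        rw [show -(‖p.1‖ ^ 2 + ‖p.2‖ ^ 2) / 2 = -‖p.1‖ ^ 2 / 2 + -‖p.2‖ ^ 2 / 2 by ring,
          Real.exp_add]
        ring
    _ ≤ C ^ k * ((8 ^ k * Real.exp (-(1 / 4) * ‖p.1‖ ^ 2)) *
          (8 ^ k * Real.exp (-(1 / 4) * ‖p.2‖ ^ 2))) := by
        gcongr C ^ k * (?_ * ?_)
        · exact pow_mul_exp_le k hk _ (by positivity)
        · exact pow_mul_exp_le k hk _ (by positivity)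
    _ = (C * 64) ^ k *
          (Real.exp (-(1 / 4) * ‖p.1‖ ^ 2) * Real.exp (-(1 / 4) * ‖p.2‖ ^ 2)) := by
        rw [show (64 : ℝ) = 8 * 8 by norm_num, mul_pow, mul_pow]
        ring

/-- For `k ≤ 2`, the moment `Ψ_k` is positive as soon as the `k`-th power of the biquadratic form is
nonnegative and not identically zero. -/
lemma Psi_pos (c : Fin 4 → Fin 4 → ℝ) (hc : ∀ i j, c i j = c j i) (k : ℕ) (hk : k ≤ 2)
    (h0 : ∀ X Y, 0 ≤ sect c X Y ^ k) (X₀ Y₀ : E4) (h1 : sect c X₀ Y₀ ≠ 0) :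
    0 < Psi 4 k (diagCurv c hc) := by
  have hint := integrable_integrand c k hk
  have hpos : 0 < ∫ X : E4, ∫ Y : E4,
      Real.exp (-(‖X‖ ^ 2 + ‖Y‖ ^ 2) / 2) * sect c X Y ^ k := by
    rw [← integral_prod (fun p : E4 × E4 =>
      Real.exp (-(‖p.1‖ ^ 2 + ‖p.2‖ ^ 2) / 2) * sect c p.1 p.2 ^ k) hint]
    refine (integral_pos_iff_support_of_nonneg
      (fun p => mul_nonneg (Real.exp_pos _).le (h0 _ _)) hint).2 ?_
    exact (continuous_integrand c k).isOpen_support.measure_pos _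
      ⟨(X₀, Y₀), mul_ne_zero (Real.exp_pos _).ne' (pow_ne_zero _ h1)⟩
  have hfall : 0 < fall (((4 : ℕ) : ℝ) + 2 * k - 2) (2 * k) := by
    interval_cases k <;> norm_num [fall, Finset.prod_range_succ]
  unfold Psi
  simp only [inner_diagCurv]
  exact mul_pos (inv_pos.2 hfall) (mul_pos (Real.rpow_pos_of_pos (by positivity) _) hpos)

/-- If permuting the coordinates by `σ` negates the coefficients, then `Ψ_1` vanishes: the
permutation preserves the Gaussian measure and changes the sign of the integrand. -/
lemma Psi_one_eq_zero (c : Fin 4 → Fin 4 → ℝ) (hc : ∀ i j, c i j = c j i)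
    (σ : Equiv.Perm (Fin 4)) (hσ : ∀ i j, c (σ i) (σ j) = -c i j) :
    Psi 4 1 (diagCurv c hc) = 0 := by
  set P := LinearIsometryEquiv.piLpCongrLeft 2 ℝ ℝ σ with hP
  have hsub : ∀ f : E4 → ℝ, ∫ X, f (P X) = ∫ X, f X := fun f =>
    P.measurePreserving.integral_comp P.toHomeomorph.measurableEmbedding f
  have hneg : ∀ X Y, sect c (P X) (P Y) = -sect c X Y := by
    intro X Y
    rw [hP, sect_comp]
    simp only [hσ, sect, ← Finset.sum_neg_distrib, neg_mul]
  have key : ∫ X : E4, ∫ Y : E4, Real.exp (-(‖X‖ ^ 2 + ‖Y‖ ^ 2) / 2) * sect c X Y ^ 1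
      = -∫ X : E4, ∫ Y : E4, Real.exp (-(‖X‖ ^ 2 + ‖Y‖ ^ 2) / 2) * sect c X Y ^ 1 := by
    conv_lhs => rw [← hsub]
    rw [← integral_neg]
    congr 1
    funext X
    rw [← hsub, ← integral_neg]
    congr 1
    funext Y
    rw [hneg, P.norm_map, P.norm_map]
    ring
  unfold Psi
  simp only [inner_diagCurv]
  rw [self_eq_neg.1 key, mul_zero, mul_zero]

/-! ### The three separating tensors -/

lemma ricci_diagCurv (c : Fin 4 → Fin 4 → ℝ) (hc : ∀ i j, c i j = c j i) (μ ν : Fin 4) :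
    ricci (diagCurv c hc) (EuclideanSpace.single μ 1) (EuclideanSpace.single ν 1) =
      if μ = ν then (∑ j, c μ j) - c μ μ else 0 := by
  simp only [ricci, EuclideanSpace.inner_single_right, conj_trivial, one_mul, diagCurv_apply]
  fin_cases μ <;> fin_cases ν <;> simp [Fin.sum_univ_four, hc] <;> ring

/-- The coefficients of constant sectional curvature one. -/
def roundCoeff (i j : Fin 4) : ℝ := if i = j then 0 else 1

/-- Coefficients of a Weyl tensor: `c₀₁ = c₂₃ = 1`, `c₀₂ = c₁₃ = -1`, all row sums zero. -/
def weylCoeff : Fin 4 → Fin 4 → ℝ :=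
  ![![0, 1, -1, 0], ![1, 0, 0, -1], ![-1, 0, 0, 1], ![0, -1, 1, 0]]

/-- Only the `e₀ ∧ e₁` plane is curved, so the Ricci form is not a multiple of the metric. -/
def planeCoeff : Fin 4 → Fin 4 → ℝ :=
  ![![0, 1, 0, 0], ![1, 0, 0, 0], ![0, 0, 0, 0], ![0, 0, 0, 0]]

lemma roundCoeff_symm (i j : Fin 4) : roundCoeff i j = roundCoeff j i := by
  simp [roundCoeff, eq_comm]

lemma weylCoeff_symm (i j : Fin 4) : weylCoeff i j = weylCoeff j i := by
  fin_cases i <;> fin_cases j <;> simp [weylCoeff]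

lemma planeCoeff_symm (i j : Fin 4) : planeCoeff i j = planeCoeff j i := by
  fin_cases i <;> fin_cases j <;> simp [planeCoeff]

lemma ricciTraceless_round : ricciTracelessNormSq (diagCurv roundCoeff roundCoeff_symm) = 0 := by
  simp only [ricciTracelessNormSq, scalarCurv, ricci_diagCurv,
    EuclideanSpace.inner_single_right]
  simp [Fin.sum_univ_four, roundCoeff]
  norm_num

lemma ricciTraceless_weyl : ricciTracelessNormSq (diagCurv weylCoeff weylCoeff_symm) = 0 := by
  simp only [ricciTracelessNormSq, scalarCurv, ricci_diagCurv,
    EuclideanSpace.inner_single_right]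
  simp [Fin.sum_univ_four, weylCoeff]

lemma ricciTraceless_plane : ricciTracelessNormSq (diagCurv planeCoeff planeCoeff_symm) ≠ 0 := by
  simp only [ricciTracelessNormSq, scalarCurv, ricci_diagCurv,
    EuclideanSpace.inner_single_right]
  simp [Fin.sum_univ_four, planeCoeff]
  norm_num

lemma Psi_one_round : 0 < Psi 4 1 (diagCurv roundCoeff roundCoeff_symm) := by
  refine Psi_pos _ _ 1 (by norm_num) (fun X Y => ?_) (EuclideanSpace.single 0 1)
    (EuclideanSpace.single 1 1) ?_
  · -- Lagrange's identity: the form is the sum over `i < j` of the squared minors.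
    have : sect roundCoeff X Y ^ 1 =
        (Y 0 * X 1 - Y 1 * X 0) ^ 2 + (Y 0 * X 2 - Y 2 * X 0) ^ 2 +
        (Y 0 * X 3 - Y 3 * X 0) ^ 2 + (Y 1 * X 2 - Y 2 * X 1) ^ 2 +
        (Y 1 * X 3 - Y 3 * X 1) ^ 2 + (Y 2 * X 3 - Y 3 * X 2) ^ 2 := by
      simp [sect, Fin.sum_univ_four, roundCoeff]
      ring
    rw [this]
    positivity
  · simp [sect, roundCoeff]

lemma Psi_two_weyl : 0 < Psi 4 2 (diagCurv weylCoeff weylCoeff_symm) := by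
  refine Psi_pos _ _ 2 le_rfl (fun X Y => sq_nonneg _) (EuclideanSpace.single 0 1)
    (EuclideanSpace.single 1 1) ?_
  simp [sect, weylCoeff]

lemma Psi_one_weyl : Psi 4 1 (diagCurv weylCoeff weylCoeff_symm) = 0 := by
  refine Psi_one_eq_zero _ _ (Equiv.swap 1 2) fun i j => ?_
  fin_cases i <;> fin_cases j <;> simp [weylCoeff, Equiv.swap_apply_def]

/-- The three quadratic invariants `Ψ_1²`, `Ψ_2` and `|Ric°|²` are linearly independent
functions on the space of algebraic curvature tensors over `ℝ⁴`. -/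
theorem quadratic_invariants_linearly_independent (α β γ : ℝ)
    (h : ∀ Rc : AlgCurvTensor (EuclideanSpace ℝ (Fin 4)),
      α * (Psi 4 1 Rc) ^ 2 + β * Psi 4 2 Rc + γ * ricciTracelessNormSq Rc = 0) :
    α = 0 ∧ β = 0 ∧ γ = 0 := by
  have hβ : β = 0 := by
    have := h (diagCurv weylCoeff weylCoeff_symm)
    rw [Psi_one_weyl, ricciTraceless_weyl] at this
    simpa [Psi_two_weyl.ne'] using this
  have hα : α = 0 := by
    have := h (diagCurv roundCoeff roundCoeff_symm)
    rw [hβ, ricciTraceless_round] at this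
    simpa [Psi_one_round.ne'] using this
  have hγ : γ = 0 := by
    have := h (diagCurv planeCoeff planeCoeff_symm)
    rw [hβ, hα] at this
    simpa [ricciTraceless_plane] using this
  exact ⟨hα, hβ, hγ⟩
end
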